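/- arXiv:2510.08250 — 4 statements merged into one kernel-verified Lean document; each statement's English description precedes it below -/
import Mathlib

section
/- Let S and V be complex vector spaces with dim S = 2 and dim V = n > 2. Consider the GL(S)-action on Hom(S,V) ⊕ Hom(V,S) ⊕ End(S) given by g·(x,y,p) = (x g⁻¹, g y, g p g⁻¹). The ring of GL(S)-invariant polynomial functions is generated by the entries of x∘y ∈ End(V), the entries of x∘p∘y ∈ End(V), together with det(p) and Tr(p). -/
namespace Inv2

open MvPolynomial

section omega

set_option linter.unusedSectionVars false
set_option linter.unusedSimpArgs false

variable {R : Type*} [CommRing R] [Algebra ℂ R]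

/-- polynomials in the four entries of a generic `2 × 2` matrix `g` -/
abbrev SR (R : Type*) [CommRing R] := MvPolynomial (Fin 2 × Fin 2) R

/-- partial derivative in the entry `g i j` -/
noncomputable def dd (i j : Fin 2) (u : SR R) : SR R := pderiv (i, j) u

lemma dd_add (i j : Fin 2) (u v : SR R) : dd i j (u + v) = dd i j u + dd i j v := by simp [dd]
lemma dd_sub (i j : Fin 2) (u v : SR R) : dd i j (u - v) = dd i j u - dd i j v := by simp [dd]
lemma dd_neg (i j : Fin 2) (u : SR R) : dd i j (-u) = - dd i j u := by simp [dd]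
lemma dd_mul (i j : Fin 2) (u v : SR R) : dd i j (u * v) = u * dd i j v + v * dd i j u := by
  simp [dd, Derivation.leibniz]
lemma dd_C (i j : Fin 2) (r : R) : dd i j (C r : SR R) = 0 := by simp [dd]
lemma dd_X (i j a b : Fin 2) : dd i j (X (a, b) : SR R) = if a = i ∧ b = j then 1 else 0 := by
  simp [dd, pderiv_X, Pi.single_apply, eq_comm]
lemma dd_alg (i j : Fin 2) (r : ℂ) : dd i j (algebraMap ℂ (SR R) r) = 0 := by
  rw [IsScalarTower.algebraMap_apply ℂ R (SR R), MvPolynomial.algebraMap_eq, dd_C]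

/-- the polarised Omega operator -/
noncomputable def br (u v : SR R) : SR R :=
  dd 0 0 u * dd 1 1 v + dd 1 1 u * dd 0 0 v - dd 0 1 u * dd 1 0 v - dd 1 0 u * dd 0 1 v

/-- Cayley's Omega operator -/
noncomputable def Om (u : SR R) : SR R := dd 0 0 (dd 1 1 u) - dd 0 1 (dd 1 0 u)

lemma br_comm (u v : SR R) : br u v = br v u := by unfold br; ring
lemma br_add (u v w : SR R) : br u (v + w) = br u v + br u w := by
  simp only [br, dd_add]; ring
lemma br_mul (u v w : SR R) : br u (v * w) = v * br u w + w * br u v := by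
  simp only [br, dd_mul]; ring
lemma br_alg (u : SR R) (r : ℂ) : br u (algebraMap ℂ _ r) = 0 := by
  simp only [br, dd_alg]; ring
lemma br_C (u : SR R) (r : R) : br u (C r) = 0 := by
  simp only [br, dd_C]; ring
lemma Om_add (u v : SR R) : Om (u + v) = Om u + Om v := by
  simp only [Om, dd_add]; ring
lemma Om_mul (u v : SR R) : Om (u * v) = u * Om v + v * Om u + br u v := by
  simp only [Om, br, dd_add, dd_mul]; ring
lemma dd_zero (i j : Fin 2) : dd i j (0 : SR R) = 0 := by simp [dd]
lemma dd_one (i j : Fin 2) : dd i j (1 : SR R) = 0 := by simp [dd]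
lemma Om_alg (r : ℂ) : Om (algebraMap ℂ (SR R) r) = 0 := by
  simp only [Om, dd_alg, dd_zero]; ring
lemma Om_C (r : R) : Om (C r : SR R) = 0 := by
  simp only [Om, dd_C, dd_zero]; ring

lemma br_mem (G : Set (SR R)) (h : ∀ u ∈ G, ∀ v ∈ G, br u v ∈ Algebra.adjoin ℂ G)
    {u v : SR R} (hu : u ∈ Algebra.adjoin ℂ G) (hv : v ∈ Algebra.adjoin ℂ G) :
    br u v ∈ Algebra.adjoin ℂ G := by
  have step : ∀ u : SR R, (∀ v ∈ G, br u v ∈ Algebra.adjoin ℂ G) →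
      ∀ v ∈ Algebra.adjoin ℂ G, br u v ∈ Algebra.adjoin ℂ G := by
    intro u hu v hv
    induction hv using Algebra.adjoin_induction with
    | mem x hx => exact hu x hx
    | algebraMap r => rw [br_alg]; exact zero_mem _
    | add x y _ _ hx hy => rw [br_add]; exact add_mem hx hy
    | mul x y hx' hy' hx hy =>
      rw [br_mul]; exact add_mem (mul_mem hx' hy) (mul_mem hy' hx)
  refine step u (fun w hw => ?_) v hv
  rw [br_comm]
  exact step w (fun v hv => h w hw v hv) u hu

lemma Om_mem (G : Set (SR R)) (h : ∀ u ∈ G, ∀ v ∈ G, br u v ∈ Algebra.adjoin ℂ G)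
    (h' : ∀ u ∈ G, Om u ∈ Algebra.adjoin ℂ G)
    {u : SR R} (hu : u ∈ Algebra.adjoin ℂ G) : Om u ∈ Algebra.adjoin ℂ G := by
  induction hu using Algebra.adjoin_induction with
  | mem x hx => exact h' x hx
  | algebraMap r => rw [Om_alg]; exact zero_mem _
  | add x y _ _ hx hy => rw [Om_add]; exact add_mem hx hy
  | mul x y hx' hy' hx hy =>
    rw [Om_mul]
    exact add_mem (add_mem (mul_mem hx' hy) (mul_mem hy' hx)) (br_mem G h hx' hy')

/-- linear form `g_i · v` -/
noncomputable def ll (i : Fin 2) (v : Fin 2 → R) : SR R := X (i, 0) * C (v 0) + X (i, 1) * C (v 1)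

/-- quadratic form `g_a p J g_b` -/
noncomputable def qq (p : Matrix (Fin 2) (Fin 2) R) (a b : Fin 2) : SR R :=
  (X (a, 0) * C (p 0 0) + X (a, 1) * C (p 1 0)) * X (b, 1)
    - (X (a, 0) * C (p 0 1) + X (a, 1) * C (p 1 1)) * X (b, 0)

/-- determinant of `g` -/
noncomputable def dt : SR R := X (0, 0) * X (1, 1) - X (0, 1) * X (1, 0)

/-- the sign symbol -/
def ee (a b : Fin 2) : ℤ := (b : ℤ) - (a : ℤ)

/-- wedge of two vectors -/
def wd (v w : Fin 2 → R) : R := v 0 * w 1 - v 1 * w 0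

lemma br_ll (i j : Fin 2) (v w : Fin 2 → R) :
    br (ll i v) (ll j w) = (ee i j : SR R) * C (wd v w) := by
  fin_cases i <;> fin_cases j <;>
    simp [br, ll, wd, ee, dd_add, dd_mul, dd_C, dd_X] <;> ring

lemma br_ql (p : Matrix (Fin 2) (Fin 2) R) (a b c : Fin 2) (v : Fin 2 → R) :
    br (qq p a b) (ll c v) =
      (ee a c : SR R) * (C p.trace * ll b v - ll b (p.mulVec v)) -
      (ee b c : SR R) * ll a (p.mulVec v) := by
  fin_cases a <;> fin_cases b <;> fin_cases c <;>
    simp [br, ll, qq, ee, dd_add, dd_sub, dd_mul, dd_C, dd_X, Matrix.trace, Matrix.mulVec,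
      dotProduct] <;> ring

lemma br_qq (p : Matrix (Fin 2) (Fin 2) R) (a b c d : Fin 2) :
    br (qq p a b) (qq p c d) =
      2 * (ee a c : SR R) * (ee b d : SR R) * C p.det * dt +
      (ee a d : SR R) * (C p.trace * qq p c b - C p.det * (ee c b : SR R) * dt) -
      (ee b c : SR R) * (C p.trace * qq p a d - C p.det * (ee a d : SR R) * dt) := by
  fin_cases a <;> fin_cases b <;> fin_cases c <;> fin_cases d <;>
    simp [br, dt, qq, ee, dd_add, dd_sub, dd_mul, dd_C, dd_X, Matrix.trace, Matrix.det_fin_two]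
      <;> ring

lemma br_dl (c : Fin 2) (v : Fin 2 → R) : br dt (ll c v) = ll c v := by
  fin_cases c <;>
    simp [br, ll, dt, dd_add, dd_sub, dd_mul, dd_C, dd_X] <;> ring

lemma br_dq (p : Matrix (Fin 2) (Fin 2) R) (a b : Fin 2) :
    br dt (qq p a b) = 2 * qq p a b := by
  fin_cases a <;> fin_cases b <;>
    simp [br, qq, dt, dd_add, dd_sub, dd_mul, dd_C, dd_X] <;> ring

lemma br_dd : br (dt : SR R) dt = 2 * dt := by
  simp [br, dt, dd_sub, dd_mul, dd_X]; ring

lemma Om_ll (i : Fin 2) (v : Fin 2 → R) : Om (ll i v) = 0 := by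
  fin_cases i <;> simp [Om, ll, dd_add, dd_mul, dd_C, dd_X, dd_zero]

lemma Om_qq (p : Matrix (Fin 2) (Fin 2) R) (a b : Fin 2) :
    Om (qq p a b) = (ee a b : SR R) * C p.trace := by
  fin_cases a <;> fin_cases b <;>
    simp [Om, qq, ee, dd_add, dd_sub, dd_neg, dd_mul, dd_C, dd_X, dd_zero, dd_one, Matrix.trace] <;> ring

lemma Om_dt : Om (dt : SR R) = 2 := by
  simp [Om, dt, dd_sub, dd_neg, dd_mul, dd_X, dd_zero, dd_one]; norm_num

/-- generators of the covariant algebra -/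
def GG (p : Matrix (Fin 2) (Fin 2) R) (A : Subalgebra ℂ R) (V : Set (Fin 2 → R)) : Set (SR R) :=
  {u | (∃ r ∈ A, u = C r) ∨ (∃ i, ∃ v ∈ V, u = ll i v) ∨ (∃ a b, u = qq p a b) ∨ u = dt}

lemma int_mem (B : Subalgebra ℂ (SR R)) (m : ℤ) : (m : SR R) ∈ B := intCast_mem B m

variable {p : Matrix (Fin 2) (Fin 2) R} {A : Subalgebra ℂ R} {V : Set (Fin 2 → R)}

lemma memC {r : R} (hr : r ∈ A) : C r ∈ Algebra.adjoin ℂ (GG p A V) :=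
  Algebra.subset_adjoin (Or.inl ⟨r, hr, rfl⟩)
lemma memll {v : Fin 2 → R} (hv : v ∈ V) (i : Fin 2) : ll i v ∈ Algebra.adjoin ℂ (GG p A V) :=
  Algebra.subset_adjoin (Or.inr (Or.inl ⟨i, v, hv, rfl⟩))
lemma memqq (a b : Fin 2) : qq p a b ∈ Algebra.adjoin ℂ (GG p A V) :=
  Algebra.subset_adjoin (Or.inr (Or.inr (Or.inl ⟨a, b, rfl⟩)))
lemma memdt : dt ∈ Algebra.adjoin ℂ (GG p A V) :=
  Algebra.subset_adjoin (Or.inr (Or.inr (Or.inr rfl)))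

lemma memllp (htr : p.trace ∈ A) (hdet : p.det ∈ A)
    (hV : ∀ v ∈ V, p.mulVec v ∈ V ∨ ∃ w ∈ V, v = p.mulVec w)
    {v : Fin 2 → R} (hv : v ∈ V) (i : Fin 2) :
    ll i (p.mulVec v) ∈ Algebra.adjoin ℂ (GG p A V) := by
  rcases hV v hv with h | ⟨w, hw, rfl⟩
  · exact memll h i
  · have : ll i (p.mulVec (p.mulVec w)) = C p.trace * ll i (p.mulVec w) - C p.det * ll i w := by
      simp [ll, Matrix.trace, Matrix.mulVec, dotProduct, Matrix.det_fin_two]; ring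
    rw [this]
    exact sub_mem (mul_mem (memC htr) (memll hv i)) (mul_mem (memC hdet) (memll hw i))

lemma Om_closed (htr : p.trace ∈ A) (hdet : p.det ∈ A)
    (hV : ∀ v ∈ V, p.mulVec v ∈ V ∨ ∃ w ∈ V, v = p.mulVec w)
    (hw : ∀ v ∈ V, ∀ w ∈ V, wd v w ∈ A)
    {u : SR R} (hu : u ∈ Algebra.adjoin ℂ (GG p A V)) : Om u ∈ Algebra.adjoin ℂ (GG p A V) := by
  have two : (2 : SR R) ∈ Algebra.adjoin ℂ (GG p A V) := by exact_mod_cast int_mem _ 2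
  have hql : ∀ a b c : Fin 2, ∀ v ∈ V, br (qq p a b) (ll c v) ∈ Algebra.adjoin ℂ (GG p A V) := by
    intro a b c v hv
    rw [br_ql]
    exact sub_mem (mul_mem (int_mem _ _) (sub_mem (mul_mem (memC htr) (memll hv b))
      (memllp htr hdet hV hv b))) (mul_mem (int_mem _ _) (memllp htr hdet hV hv a))
  have hqq : ∀ a b c d : Fin 2, br (qq p a b) (qq p c d) ∈ Algebra.adjoin ℂ (GG p A V) := by
    intro a b c d
    rw [br_qq]
    refine sub_mem (add_mem (mul_mem (mul_mem (mul_mem (mul_mem two (int_mem _ _)) (int_mem _ _))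
      (memC hdet)) memdt) (mul_mem (int_mem _ _) (sub_mem (mul_mem (memC htr) (memqq _ _))
      (mul_mem (mul_mem (memC hdet) (int_mem _ _)) memdt))))
      (mul_mem (int_mem _ _) (sub_mem (mul_mem (memC htr) (memqq _ _))
      (mul_mem (mul_mem (memC hdet) (int_mem _ _)) memdt)))
  refine Om_mem _ ?_ ?_ hu
  · rintro u (⟨r, hr, rfl⟩ | ⟨i, v, hv, rfl⟩ | ⟨a, b, rfl⟩ | rfl) u'
      (⟨r', hr', rfl⟩ | ⟨i', v', hv', rfl⟩ | ⟨a', b', rfl⟩ | rfl)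
    · rw [br_C]; exact zero_mem _
    · rw [br_comm, br_C]; exact zero_mem _
    · rw [br_comm, br_C]; exact zero_mem _
    · rw [br_comm, br_C]; exact zero_mem _
    · rw [br_C]; exact zero_mem _
    · rw [br_ll]; exact mul_mem (int_mem _ _) (memC (hw v hv v' hv'))
    · rw [br_comm]; exact hql _ _ _ _ hv
    · rw [br_comm, br_dl]; exact memll hv i
    · rw [br_C]; exact zero_mem _
    · exact hql _ _ _ _ hv'
    · exact hqq _ _ _ _
    · rw [br_comm, br_dq]; exact mul_mem two (memqq _ _)
    · rw [br_C]; exact zero_mem _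
    · rw [br_dl]; exact memll hv' i'
    · rw [br_dq]; exact mul_mem two (memqq _ _)
    · rw [br_dd]; exact mul_mem two memdt
  · rintro u (⟨r, hr, rfl⟩ | ⟨i, v, hv, rfl⟩ | ⟨a, b, rfl⟩ | rfl)
    · rw [Om_C]; exact zero_mem _
    · rw [Om_ll]; exact zero_mem _
    · rw [Om_qq]; exact mul_mem (int_mem _ _) (memC htr)
    · rw [Om_dt]; exact two

/-- setting `g = 0` maps the covariant algebra to the invariants -/
lemma const_mem {u : SR R} (hu : u ∈ Algebra.adjoin ℂ (GG p A V)) : constantCoeff u ∈ A := by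
  induction hu using Algebra.adjoin_induction with
  | mem x hx =>
    rcases hx with (⟨r, hr, rfl⟩ | ⟨i, v, hv, rfl⟩ | ⟨a, b, rfl⟩ | rfl)
    · simpa using hr
    · simp [ll]
    · simp [qq]
    · simp [dt]
  | algebraMap r =>
    rw [IsScalarTower.algebraMap_apply ℂ R (SR R), MvPolynomial.algebraMap_eq, constantCoeff_C]
    exact A.algebraMap_mem r
  | add x y _ _ hx hy => rw [map_add]; exact add_mem hx hy
  | mul x y _ _ hx hy => rw [map_mul]; exact mul_mem hx hy

open Polynomial in
/-- radial part of Omega -/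
lemma Om_aeval (q : R[X]) :
    Om (Polynomial.aeval (dt : SR R) q) =
      Polynomial.aeval (dt : SR R) (derivative (derivative (Polynomial.X * q))) := by
  have hd : ∀ (i j : Fin 2) (q : R[X]), dd i j (Polynomial.aeval (dt : SR R) q) =
      Polynomial.aeval (dt : SR R) (derivative q) * dd i j dt := by
    intro i j q
    simp only [dd]
    induction q using Polynomial.induction_on' with
    | add a b ha hb => simp only [map_add, ha, hb, derivative_add]; ring
    | monomial k a =>
      simp only [Polynomial.aeval_monomial, derivative_monomial, MvPolynomial.algebraMap_eq,
        Derivation.leibniz, Derivation.leibniz_pow, pderiv_C, smul_eq_mul, map_mul, map_natCast,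
        nsmul_eq_mul]
      ring
  simp only [Om, hd, dd_mul]
  simp only [dt, dd_sub, dd_mul, dd_X, derivative_mul, derivative_X, derivative_add, map_add,
    map_mul, Polynomial.aeval_X]
  simp [dd_X, dd_zero, dd_one]
  ring

open Polynomial in
lemma coeff_mem (htr : p.trace ∈ A) (hdet : p.det ∈ A)
    (hV : ∀ v ∈ V, p.mulVec v ∈ V ∨ ∃ w ∈ V, v = p.mulVec w)
    (hw : ∀ v ∈ V, ∀ w ∈ V, wd v w ∈ A) (k : ℕ) :
    ∀ q : R[X], Polynomial.aeval (dt : SR R) q ∈ Algebra.adjoin ℂ (GG p A V) → q.coeff k ∈ A := by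
  induction k with
  | zero =>
    intro q hq
    have := const_mem hq
    convert this using 1
    rw [Polynomial.aeval_def, Polynomial.hom_eval₂]
    have h0 : constantCoeff (dt : SR R) = 0 := by simp [dt]
    rw [h0, Polynomial.eval₂_at_zero]
    simp [MvPolynomial.algebraMap_eq]
  | succ k ih =>
    intro q hq
    have h1 := Om_closed htr hdet hV hw hq
    rw [Om_aeval] at h1
    have h2 := ih _ h1
    rw [coeff_derivative, coeff_derivative, Polynomial.coeff_X_mul] at h2
    have h3 := A.smul_mem h2 (((k + 1 + 1 : ℂ) * (k + 1))⁻¹)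
    convert h3 using 1
    have e : q.coeff (k+1) * (((k + 1 : ℕ) : R) + 1) * ((k : R) + 1)
        = ((k + 1 + 1 : ℂ) * (k + 1)) • q.coeff (k+1) := by
      rw [Algebra.smul_def]; simp; ring
    rw [e, smul_smul, inv_mul_cancel₀, one_smul]
    have a1 : (k + 1 + 1 : ℂ) ≠ 0 := by exact_mod_cast Nat.succ_ne_zero (k+1)
    have a2 : (k + 1 : ℂ) ≠ 0 := by exact_mod_cast Nat.succ_ne_zero k
    exact mul_ne_zero a1 a2

end omega

section weights

variable {R : Type*} [CommRing R] [Algebra ℂ R]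

/-- eigenvectors of `T`, as a module over the fixed subalgebra `A` -/
def EE (A : Subalgebra ℂ R) (T : R →ₐ[ℂ] R) (hT : ∀ a ∈ A, T a = a) (c : ℂ) : Submodule A R where
  carrier := {u | T u = c • u}
  add_mem' := by
    intro a b ha hb
    simp only [Set.mem_ofPred_eq] at *
    rw [map_add, ha, hb, smul_add]
  zero_mem' := by simp
  smul_mem' := by
    intro a u hu
    simp only [Set.mem_ofPred_eq] at *
    rw [Algebra.smul_def, map_mul, hu, mul_smul_comm]
    congr 2
    exact hT a a.2

lemma EE_mul (A : Subalgebra ℂ R) (T : R →ₐ[ℂ] R) (hT : ∀ a ∈ A, T a = a) (c d : ℂ) :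
    EE A T hT c * EE A T hT d ≤ EE A T hT (c * d) := by
  rw [Submodule.mul_le]
  intro u hu v hv
  change T u = c • u at hu
  change T v = d • v at hv
  change T (u * v) = (c * d) • (u * v)
  rw [map_mul, hu, hv, smul_mul_smul_comm]

lemma EE_pow (A : Subalgebra ℂ R) (T : R →ₐ[ℂ] R) (hT : ∀ a ∈ A, T a = a) (c : ℂ)
    (P : Submodule A R) (hP : P ≤ EE A T hT c) (k : ℕ) : P ^ k ≤ EE A T hT (c ^ k) := by
  induction k with
  | zero =>
    rw [pow_zero, pow_zero]
    intro u hu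
    obtain ⟨a, rfl⟩ := Submodule.mem_one.1 hu
    change T _ = (1 : ℂ) • _
    rw [one_smul]
    exact hT a a.2
  | succ k ih =>
    rw [pow_succ, pow_succ]
    exact (mul_le_mul' ih hP).trans (EE_mul A T hT _ _)

lemma weight_zero (A : Subalgebra ℂ R) (Ys Zs : Set R)
    (hYZ : ∀ u ∈ Ys, ∀ v ∈ Zs, u * v ∈ A)
    (T : R →ₐ[ℂ] R) (hT : ∀ a ∈ A, T a = a)
    (hY : ∀ u ∈ Ys, T u = (4 : ℂ) • u) (hZ : ∀ u ∈ Zs, T u = (4 : ℂ)⁻¹ • u)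
    (f : R) (hf : f ∈ Algebra.adjoin ℂ ((A : Set R) ∪ Ys ∪ Zs)) (hfT : T f = f) : f ∈ A := by
  set P : Submodule A R := Submodule.span A Ys with hPdef
  set N : Submodule A R := Submodule.span A Zs with hNdef
  have hPN : P * N ≤ 1 := by
    rw [hPdef, hNdef, Submodule.span_mul_span, Submodule.span_le]
    rintro _ ⟨u, hu, v, hv, rfl⟩
    exact Submodule.mem_one.2 ⟨⟨u * v, hYZ u hu v hv⟩, rfl⟩
  have hPNk : ∀ k i j : ℕ, P ^ (i + k) * N ^ (j + k) ≤ P ^ i * N ^ j := by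
    intro k i j
    calc P ^ (i + k) * N ^ (j + k) = (P ^ i * N ^ j) * (P * N) ^ k := by
          ring
      _ ≤ (P ^ i * N ^ j) * 1 := by
          refine mul_le_mul' le_rfl ?_
          calc (P * N) ^ k ≤ 1 ^ k := pow_le_pow_left' hPN k
            _ = 1 := one_pow k
      _ = _ := mul_one _
  let W : ℤ → Submodule A R := fun m => P ^ m.toNat * N ^ (-m).toNat
  have hWmul : ∀ a b, W a * W b ≤ W (a + b) := by
    intro a b
    have e : W a * W b = P ^ (a.toNat + b.toNat) * N ^ ((-a).toNat + (-b).toNat) := by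
      simp only [W]; rw [pow_add, pow_add]; ac_rfl
    obtain ⟨k, h1, h2⟩ : ∃ k : ℕ, a.toNat + b.toNat = (a + b).toNat + k ∧
        (-a).toNat + (-b).toNat = (-(a + b)).toNat + k := by
      refine ⟨a.toNat + b.toNat - (a + b).toNat, ?_, ?_⟩ <;> omega
    rw [e, h1, h2]
    exact hPNk _ _ _
  have hWE : ∀ m, W m ≤ EE A T hT ((4 : ℂ) ^ m) := by
    intro m
    have hP4 : P ≤ EE A T hT 4 := Submodule.span_le.2 fun u hu => hY u hu
    have hN4 : N ≤ EE A T hT 4⁻¹ := Submodule.span_le.2 fun u hu => hZ u hu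
    have := (mul_le_mul' (EE_pow A T hT 4 P hP4 m.toNat)
      (EE_pow A T hT 4⁻¹ N hN4 (-m).toNat)).trans (EE_mul A T hT _ _)
    convert this using 2
    rw [inv_pow, ← zpow_natCast, ← zpow_natCast, ← zpow_neg, ← zpow_add₀ (by norm_num)]
    congr 1
    omega
  have hW0 : ∀ u ∈ W 0, u ∈ A := by
    intro u hu
    simp only [W] at hu
    simp only [Int.toNat_zero, neg_zero, pow_zero, mul_one] at hu
    obtain ⟨a, rfl⟩ := Submodule.mem_one.1 hu
    exact a.2
  have hA0 : ∀ u ∈ A, u ∈ W 0 := by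
    intro u hu
    simp only [W]
    simp only [Int.toNat_zero, neg_zero, pow_zero, mul_one]
    exact Submodule.mem_one.2 ⟨⟨u, hu⟩, rfl⟩
  have hsup : ∀ m, W m ≤ ⨆ m, W m := fun m => le_iSup W m
  have hall : f ∈ ⨆ m, W m := by
    clear hfT
    induction hf using Algebra.adjoin_induction with
    | mem x hx =>
      rcases hx with (hx | hx) | hx
      · exact hsup 0 (hA0 x hx)
      · refine hsup 1 ?_
        simp only [W]
        simpa using Submodule.subset_span hx
      · refine hsup (-1) ?_
        simp only [W]
        simpa using Submodule.subset_span hx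
    | algebraMap r => exact hsup 0 (hA0 _ (A.algebraMap_mem r))
    | add x y _ _ hx hy => exact add_mem hx hy
    | mul x y _ _ hx hy =>
      have h1 := Submodule.mul_mem_mul hx hy
      refine (?_ : (⨆ m, W m) * (⨆ m, W m) ≤ ⨆ m, W m) h1
      rw [Submodule.iSup_mul]
      refine iSup_le fun i => ?_
      rw [Submodule.mul_iSup]
      exact iSup_le fun j => (hWmul i j).trans (hsup _)
  rw [iSup_split_single W 0] at hall
  obtain ⟨a, ha, b, hb, hab⟩ := Submodule.mem_sup.1 hall
  have hTa : T a = a := hT a (hW0 a ha)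
  have hb1 : b ∈ Module.End.eigenspace (T.toLinearMap) (1 : ℂ) := by
    rw [Module.End.mem_eigenspace_iff, one_smul]
    have : b = f - a := by rw [← hab]; ring
    rw [this]
    simp [hfT, hTa]
  have hb2 : b ∈ ⨆ (c : ℂ) (_ : c ≠ 1), Module.End.eigenspace (T.toLinearMap) c := by
    clear hb1 hab
    rw [iSup_subtype'] at hb
    induction hb using Submodule.iSup_induction' with
    | mem i x hx =>
      have h1 : (4 : ℂ) ^ (i : ℤ) ≠ 1 := by
        intro h
        have h2 : ((4 : ℝ) ^ (i : ℤ)) = 1 := Complex.ofReal_injective (by push_cast; exact h)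
        exact i.2 ((zpow_eq_one_iff_right₀ (by norm_num) (by norm_num)).1 h2)
      refine Submodule.mem_iSup_of_mem ((4 : ℂ) ^ (i : ℤ)) (Submodule.mem_iSup_of_mem h1 ?_)
      rw [Module.End.mem_eigenspace_iff]
      exact hWE _ hx
    | zero => exact zero_mem _
    | add x y _ _ hx hy => exact add_mem hx hy
  have hb0 : b = 0 :=
    Submodule.disjoint_def.1 (Module.End.eigenspaces_iSupIndep (T.toLinearMap) 1) b hb1 hb2
  rw [← hab, hb0, add_zero]
  exact hW0 a ha

end weights

section concrete

variable (n : ℕ)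

/-- the representation space -/
abbrev XX := Matrix (Fin n) (Fin 2) ℂ × Matrix (Fin 2) (Fin n) ℂ × Matrix (Fin 2) (Fin 2) ℂ

/-- functions on the representation space -/
abbrev RR := XX n → ℂ

/-- coordinate functions -/
def xx : Matrix (Fin n) (Fin 2) (RR n) := fun i j ξ => ξ.1 i j
/-- coordinate functions -/
def yy : Matrix (Fin 2) (Fin n) (RR n) := fun i j ξ => ξ.2.1 i j
/-- coordinate functions -/
def pp : Matrix (Fin 2) (Fin 2) (RR n) := fun i j ξ => ξ.2.2 i j

/-- column of `y` -/
def yv (j : Fin n) : Fin 2 → RR n := fun i => yy n i j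
/-- rotated row of `x` -/
def zv (k : Fin n) : Fin 2 → RR n := ![- xx n k 1, xx n k 0]

/-- vectors of type `y` -/
def YV : Set (Fin 2 → RR n) := {v | ∃ j, v = yv n j ∨ v = (pp n).mulVec (yv n j)}
/-- vectors of type `x` -/
def ZV : Set (Fin 2 → RR n) := {v | ∃ j, v = zv n j ∨ v = (pp n).mulVec (zv n j)}

/-- the claimed generators -/
def gens : (Fin n × Fin n) ⊕ (Fin n × Fin n) ⊕ Fin 2 → RR n :=
  Sum.elim (fun ij => (xx n * yy n) ij.1 ij.2)
    (Sum.elim (fun ij => (xx n * pp n * yy n) ij.1 ij.2) ![(pp n).det, (pp n).trace])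

/-- the claimed algebra of invariants -/
def AA : Subalgebra ℂ (RR n) := Algebra.adjoin ℂ (Set.range (gens n))

lemma xy_mem (i j : Fin n) : (xx n * yy n) i j ∈ AA n :=
  Algebra.subset_adjoin ⟨Sum.inl (i, j), rfl⟩
lemma xpy_mem (i j : Fin n) : (xx n * pp n * yy n) i j ∈ AA n :=
  Algebra.subset_adjoin ⟨Sum.inr (Sum.inl (i, j)), rfl⟩
lemma det_mem : (pp n).det ∈ AA n :=
  Algebra.subset_adjoin ⟨Sum.inr (Sum.inr 0), rfl⟩
lemma tr_mem : (pp n).trace ∈ AA n :=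
  Algebra.subset_adjoin ⟨Sum.inr (Sum.inr 1), rfl⟩

lemma wd_mem {v w : Fin 2 → RR n} (hv : v ∈ YV n) (hw : w ∈ ZV n) : wd v w ∈ AA n := by
  obtain ⟨j, hj⟩ := hv
  obtain ⟨i, hi⟩ := hw
  rcases hj with rfl | rfl <;> rcases hi with rfl | rfl
  · have : wd (yv n j) (zv n i) = (xx n * yy n) i j := by
      simp [wd, yv, zv, Matrix.mul_apply, Fin.sum_univ_two]; ring
    rw [this]; exact xy_mem n i j
  · have : wd (yv n j) ((pp n).mulVec (zv n i)) =
        (pp n).trace * (xx n * yy n) i j - (xx n * pp n * yy n) i j := by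
      simp [wd, yv, zv, Matrix.mul_apply, Fin.sum_univ_two, Matrix.mulVec, dotProduct,
        Matrix.trace]; ring
    rw [this]; exact sub_mem (mul_mem (tr_mem n) (xy_mem n i j)) (xpy_mem n i j)
  · have : wd ((pp n).mulVec (yv n j)) (zv n i) = (xx n * pp n * yy n) i j := by
      simp [wd, yv, zv, Matrix.mul_apply, Fin.sum_univ_two, Matrix.mulVec, dotProduct]; ring
    rw [this]; exact xpy_mem n i j
  · have : wd ((pp n).mulVec (yv n j)) ((pp n).mulVec (zv n i)) =
        (pp n).det * (xx n * yy n) i j := by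
      simp [wd, yv, zv, Matrix.mul_apply, Fin.sum_univ_two, Matrix.mulVec, dotProduct,
        Matrix.det_fin_two]; ring
    rw [this]; exact mul_mem (det_mem n) (xy_mem n i j)

/-- brackets of weight one -/
def Ys : Set (RR n) := {u | ∃ v ∈ YV n, ∃ w ∈ YV n, u = wd v w}
/-- brackets of weight minus one -/
def Zs : Set (RR n) := {u | ∃ v ∈ ZV n, ∃ w ∈ ZV n, u = wd v w}

lemma Ys_mul_Zs : ∀ u ∈ Ys n, ∀ v ∈ Zs n, u * v ∈ AA n := by
  rintro _ ⟨a, ha, b, hb, rfl⟩ _ ⟨c, hc, d, hd, rfl⟩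
  have : wd a b * wd c d = wd a c * wd b d - wd a d * wd b c := by simp only [wd]; ring
  rw [this]
  exact sub_mem (mul_mem (wd_mem n ha hc) (wd_mem n hb hd))
    (mul_mem (wd_mem n ha hd) (wd_mem n hb hc))

/-- the action of the scalar `2` -/
noncomputable def phi (ξ : XX n) : XX n := ((2 : ℂ)⁻¹ • ξ.1, (2 : ℂ) • ξ.2.1, ξ.2.2)

/-- the action of the scalar `2` on functions -/
noncomputable def TT : RR n →ₐ[ℂ] RR n where
  toFun f := f ∘ phi n
  map_one' := rfl
  map_mul' _ _ := rfl
  map_zero' := rfl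
  map_add' _ _ := rfl
  commutes' _ := rfl

lemma TT_x (i j) : TT n (xx n i j) = (2 : ℂ)⁻¹ • xx n i j := rfl
lemma TT_y (i j) : TT n (yy n i j) = (2 : ℂ) • yy n i j := rfl
lemma TT_p (i j) : TT n (pp n i j) = pp n i j := rfl

lemma TT_A : ∀ a ∈ AA n, TT n a = a := by
  intro a ha
  induction ha using Algebra.adjoin_induction with
  | mem x hx =>
    obtain ⟨i, rfl⟩ := hx
    rcases i with ⟨i, j⟩ | ⟨i, j⟩ | i
    · simp [gens, Matrix.mul_apply, TT_x, TT_y]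
    · simp [gens, Matrix.mul_apply, TT_x, TT_y, TT_p, ← smul_add, smul_smul]
    · fin_cases i
      · simp [gens, Matrix.det_fin_two, TT_p]
      · simp [gens, Matrix.trace, TT_p]
  | algebraMap r => simp
  | add x y _ _ hx hy => rw [map_add, hx, hy]
  | mul x y _ _ hx hy => rw [map_mul, hx, hy]

lemma TT_YV {v : Fin 2 → RR n} (hv : v ∈ YV n) (i : Fin 2) : TT n (v i) = (2 : ℂ) • v i := by
  obtain ⟨j, rfl | rfl⟩ := hv
  · rfl
  · simp [Matrix.mulVec, dotProduct, yv, TT_p, TT_y]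

lemma TT_ZV {v : Fin 2 → RR n} (hv : v ∈ ZV n) (i : Fin 2) : TT n (v i) = (2 : ℂ)⁻¹ • v i := by
  have h0 : ∀ j i, TT n (zv n j i) = (2 : ℂ)⁻¹ • zv n j i := by
    intro j i
    fin_cases i <;> simp [zv, TT_x]
  obtain ⟨j, rfl | rfl⟩ := hv
  · exact h0 j i
  · simp [Matrix.mulVec, dotProduct, TT_p, h0]

lemma TT_Ys : ∀ u ∈ Ys n, TT n u = (4 : ℂ) • u := by
  rintro _ ⟨a, ha, b, hb, rfl⟩
  simp only [wd, map_sub, map_mul, TT_YV n ha, TT_YV n hb, smul_mul_smul_comm, ← smul_sub]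
  norm_num

lemma TT_Zs : ∀ u ∈ Zs n, TT n u = (4 : ℂ)⁻¹ • u := by
  rintro _ ⟨a, ha, b, hb, rfl⟩
  simp only [wd, map_sub, map_mul, TT_ZV n ha, TT_ZV n hb, smul_mul_smul_comm, ← smul_sub]
  norm_num

/-- algebra generated by all brackets -/
def BB : Subalgebra ℂ (RR n) := Algebra.adjoin ℂ ((AA n : Set (RR n)) ∪ Ys n ∪ Zs n)

lemma AA_le_BB {a : RR n} (ha : a ∈ AA n) : a ∈ BB n :=
  Algebra.subset_adjoin (Or.inl (Or.inl ha))

lemma wd_BB : ∀ v ∈ YV n ∪ ZV n, ∀ w ∈ YV n ∪ ZV n, wd v w ∈ BB n := by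
  rintro v (hv | hv) w (hw | hw)
  · exact Algebra.subset_adjoin (Or.inl (Or.inr ⟨v, hv, w, hw, rfl⟩))
  · exact AA_le_BB n (wd_mem n hv hw)
  · have : wd v w = - wd w v := by simp only [wd]; ring
    rw [this]; exact neg_mem (AA_le_BB n (wd_mem n hw hv))
  · exact Algebra.subset_adjoin (Or.inr ⟨v, hv, w, hw, rfl⟩)

lemma V_closed : ∀ v ∈ YV n ∪ ZV n, (pp n).mulVec v ∈ YV n ∪ ZV n ∨
    ∃ w ∈ YV n ∪ ZV n, v = (pp n).mulVec w := by
  rintro v (⟨j, rfl | rfl⟩ | ⟨j, rfl | rfl⟩)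
  · exact Or.inl (Or.inl ⟨j, Or.inr rfl⟩)
  · exact Or.inr ⟨_, Or.inl ⟨j, Or.inl rfl⟩, rfl⟩
  · exact Or.inl (Or.inr ⟨j, Or.inr rfl⟩)
  · exact Or.inr ⟨_, Or.inr ⟨j, Or.inl rfl⟩, rfl⟩

/-- index type of the coordinates -/
abbrev Idx := (Fin n × Fin 2) ⊕ (Fin 2 × Fin n) ⊕ (Fin 2 × Fin 2)

/-- entries of `x adj(g)`, `g y`, `g p adj(g)` -/
noncomputable def vals : Idx n → SR (RR n) :=
  Sum.elim (fun kj => if kj.2 = 0 then ll 1 (zv n kj.1) else - ll 0 (zv n kj.1))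
    (Sum.elim (fun ij => ll ij.1 (yv n ij.2))
      (fun ab => if ab.2 = 0 then qq (pp n) ab.1 1 else - qq (pp n) ab.1 0))

/-- entries of `s x`, `y`, `s p` -/
noncomputable def svals : Idx n → Polynomial (RR n) :=
  Sum.elim (fun kj => Polynomial.X * Polynomial.C (xx n kj.1 kj.2))
    (Sum.elim (fun ij => Polynomial.C (yy n ij.1 ij.2))
      (fun ab => Polynomial.X * Polynomial.C (pp n ab.1 ab.2)))

/-- coordinates of a point -/
def pt (x : Matrix (Fin n) (Fin 2) ℂ) (y : Matrix (Fin 2) (Fin n) ℂ)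
    (p : Matrix (Fin 2) (Fin 2) ℂ) : Idx n → ℂ :=
  Sum.elim (fun ij => x ij.1 ij.2) (Sum.elim (fun ij => y ij.1 ij.2) (fun ij => p ij.1 ij.2))

/-- evaluation of a polynomial in `g` at a point and at a matrix -/
noncomputable def ev (ξ : XX n) (g : Matrix (Fin 2) (Fin 2) ℂ) : SR (RR n) →+* ℂ :=
  eval₂Hom (Pi.evalRingHom (fun _ : XX n => ℂ) ξ) (fun ij => g ij.1 ij.2)

lemma ev_dt (ξ : XX n) (g) : ev n ξ g dt = g.det := by
  simp [ev, dt, Matrix.det_fin_two]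

lemma hom_aeval {B : Type*} [CommRing B] [Algebra ℂ B] (φ : B →+* ℂ)
    (hφ : ∀ c : ℂ, φ (algebraMap ℂ B c) = c) (v : Idx n → B) (P : MvPolynomial (Idx n) ℂ) :
    φ (aeval v P) = eval (fun i => φ (v i)) P := by
  induction P using MvPolynomial.induction_on with
  | C a => simp [hφ]
  | add p q hp hq => simp [hp, hq]
  | mul_X p i hp => simp [hp]

lemma ev_vals (ξ : XX n) (g) (P : MvPolynomial (Idx n) ℂ) :
    ev n ξ g (aeval (vals n) P) =
      eval (pt n (ξ.1 * g.adjugate) (g * ξ.2.1) (g * ξ.2.2 * g.adjugate)) P := by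
  rw [hom_aeval]
  · congr 2
    funext i
    rcases i with ⟨i, j⟩ | ⟨i, j⟩ | ⟨i, j⟩
    · fin_cases j <;> simp [vals, pt, ev, ll, zv, xx, Matrix.mul_apply, Matrix.adjugate_fin_two] <;>
        ring
    · simp [vals, pt, ev, ll, yv, yy, Matrix.mul_apply]
    · fin_cases j <;> simp [vals, pt, ev, qq, pp, Matrix.mul_apply, Matrix.adjugate_fin_two] <;>
        ring
  · intro c
    rw [IsScalarTower.algebraMap_apply ℂ (RR n) (SR (RR n)), MvPolynomial.algebraMap_eq]
    simp [ev]

lemma ev_svals (ξ : XX n) (g) (P : MvPolynomial (Idx n) ℂ) :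
    ev n ξ g (Polynomial.aeval dt (aeval (svals n) P)) =
      eval (pt n (g.det • ξ.1) (ξ.2.1) (g.det • ξ.2.2)) P := by
  have := hom_aeval n ((ev n ξ g).comp (Polynomial.aeval (R := RR n) (dt : SR (RR n))).toRingHom)
    ?_ (svals n) P
  · refine Eq.trans this ?_
    congr 2
    funext i
    rcases i with ⟨i, j⟩ | ⟨i, j⟩ | ⟨i, j⟩
    · simp [svals, pt, ev_dt, MvPolynomial.algebraMap_eq]
      simp [ev, xx, mul_comm]
    · simp [svals, pt, MvPolynomial.algebraMap_eq]
      simp [ev, yy]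
    · simp [svals, pt, ev_dt, MvPolynomial.algebraMap_eq]
      simp [ev, pp, mul_comm]
  · intro c
    rw [IsScalarTower.algebraMap_apply ℂ (RR n) (Polynomial (RR n)), Polynomial.algebraMap_eq]
    simp [ev, MvPolynomial.algebraMap_eq]

lemma ev_ext (u v : SR (RR n)) (h : ∀ ξ (g : Matrix (Fin 2) (Fin 2) ℂ), g.det ≠ 0 →
    ev n ξ g u = ev n ξ g v) : u = v := by
  have key : ∀ ξ, map (Pi.evalRingHom (fun _ : XX n => ℂ) ξ) u =
      map (Pi.evalRingHom (fun _ : XX n => ℂ) ξ) v := by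
    intro ξ
    have hd : (dt : SR ℂ) ≠ 0 := by
      intro h0
      have := congrArg (eval (fun ij : Fin 2 × Fin 2 => if ij.1 = ij.2 then (1 : ℂ) else 0)) h0
      simp [dt] at this
    apply mul_left_cancel₀ hd
    apply MvPolynomial.funext
    intro g
    rw [map_mul, map_mul]
    by_cases hg : eval g (dt : SR ℂ) = 0
    · rw [hg, zero_mul, zero_mul]
    · have := h ξ (Matrix.of fun i j => g (i, j)) (by
        rw [Matrix.det_fin_two]; simpa [dt] using hg)
      rw [eval_map, eval_map]
      congr 1
  ext m ξ
  have := congrArg (coeff m) (key ξ)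
  simpa [coeff_map] using this

end concrete

end Inv2


/-- For the `GL(S)`-action (`dim S = 2`) on
`Hom(S,V) ⊕ Hom(V,S) ⊕ End(S)` given by `g·(x,y,p) = (x g⁻¹, g y, g p g⁻¹)`,
every invariant polynomial function is a polynomial in the entries of `x∘y`,
the entries of `x∘p∘y`, together with `det p` and `Tr p`.
Here `x : Matrix (Fin n) (Fin 2) ℂ` represents `x : S → V`,
`y : Matrix (Fin 2) (Fin n) ℂ` represents `y : V → S`, and `p : End(S)`. -/
theorem stmt1 (n : ℕ) (hn : 2 < n)
    (f : Matrix (Fin n) (Fin 2) ℂ → Matrix (Fin 2) (Fin n) ℂ →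
      Matrix (Fin 2) (Fin 2) ℂ → ℂ)
    (hpoly : ∃ P : MvPolynomial ((Fin n × Fin 2) ⊕ (Fin 2 × Fin n) ⊕ (Fin 2 × Fin 2)) ℂ,
      ∀ x y p, f x y p =
        MvPolynomial.eval (Sum.elim (fun ij => x ij.1 ij.2)
          (Sum.elim (fun ij => y ij.1 ij.2) (fun ij => p ij.1 ij.2))) P)
    (hinv : ∀ g : Matrix.GeneralLinearGroup (Fin 2) ℂ, ∀ x y p,
      f (x * (↑g⁻¹ : Matrix (Fin 2) (Fin 2) ℂ))
        ((↑g : Matrix (Fin 2) (Fin 2) ℂ) * y)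
        ((↑g : Matrix (Fin 2) (Fin 2) ℂ) * p * (↑g⁻¹ : Matrix (Fin 2) (Fin 2) ℂ))
        = f x y p) :
    ∃ Q : MvPolynomial ((Fin n × Fin n) ⊕ (Fin n × Fin n) ⊕ Fin 2) ℂ,
      ∀ x y p, f x y p =
        MvPolynomial.eval (Sum.elim (fun ij => (x * y) ij.1 ij.2)
          (Sum.elim (fun ij => (x * p * y) ij.1 ij.2) ![p.det, p.trace])) Q := by
  obtain ⟨P, hP⟩ := hpoly
  have hP' : ∀ x y p, f x y p = MvPolynomial.eval (Inv2.pt n x y p) P := hP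
  let F : Inv2.RR n := fun ξ => f ξ.1 ξ.2.1 ξ.2.2
  have hid : MvPolynomial.aeval (Inv2.vals n) P =
      Polynomial.aeval (Inv2.dt) (MvPolynomial.aeval (Inv2.svals n) P) := by
    apply Inv2.ev_ext
    intro ξ g hg
    rw [Inv2.ev_vals, Inv2.ev_svals, ← hP', ← hP']
    have h1 : g * (g.det⁻¹ • g.adjugate) = 1 := by
      rw [Matrix.mul_smul, Matrix.mul_adjugate, smul_smul, inv_mul_cancel₀ hg, one_smul]
    have h2 : (g.det⁻¹ • g.adjugate) * g = 1 := by
      rw [Matrix.smul_mul, Matrix.adjugate_mul, smul_smul, inv_mul_cancel₀ hg, one_smul]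
    rw [← hinv ⟨g, g.det⁻¹ • g.adjugate, h1, h2⟩ (g.det • ξ.1) ξ.2.1 (g.det • ξ.2.2)]
    simp only [Units.inv_mk]
    congr 1
    · rw [Matrix.smul_mul, Matrix.mul_smul, smul_smul, mul_inv_cancel₀ hg, one_smul]
    · rw [Matrix.mul_smul g, Matrix.smul_mul, Matrix.mul_smul, smul_smul, mul_inv_cancel₀ hg,
        one_smul]
  have hC : MvPolynomial.aeval (Inv2.vals n) P ∈
      Algebra.adjoin ℂ (Inv2.GG (Inv2.pp n) (Inv2.BB n) (Inv2.YV n ∪ Inv2.ZV n)) := by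
    refine (?_ : (MvPolynomial.aeval (Inv2.vals n)).range ≤ _) ⟨P, rfl⟩
    rw [← Algebra.adjoin_range_eq_range_aeval]
    refine Algebra.adjoin_le ?_
    rintro _ ⟨i, rfl⟩
    rcases i with ⟨i, j⟩ | ⟨i, j⟩ | ⟨i, j⟩
    · have hz : Inv2.zv n i ∈ Inv2.YV n ∪ Inv2.ZV n := Or.inr ⟨i, Or.inl rfl⟩
      simp only [Inv2.vals, Sum.elim_inl]
      split_ifs
      · exact Inv2.memll hz 1
      · exact neg_mem (Inv2.memll hz 0)
    · exact Inv2.memll (Or.inl ⟨j, Or.inl rfl⟩) i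
    · simp only [Inv2.vals, Sum.elim_inr]
      split_ifs
      · exact Inv2.memqq _ _
      · exact neg_mem (Inv2.memqq _ _)
  rw [hid] at hC
  have hcoef : ∀ k, (MvPolynomial.aeval (Inv2.svals n) P).coeff k ∈ Inv2.BB n := fun k =>
    Inv2.coeff_mem (Inv2.AA_le_BB n (Inv2.tr_mem n)) (Inv2.AA_le_BB n (Inv2.det_mem n))
      (Inv2.V_closed n) (Inv2.wd_BB n) k _ hC
  have hF : F = (MvPolynomial.aeval (Inv2.svals n) P).eval 1 := by
    funext ξ
    have h := Inv2.ev_svals n ξ 1 P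
    rw [Matrix.det_one, one_smul, one_smul, ← hP'] at h
    refine h.symm.trans ?_
    rw [Polynomial.aeval_def, Polynomial.hom_eval₂, Inv2.ev_dt, Matrix.det_one]
    have e : (Inv2.ev n ξ 1).comp (algebraMap (Inv2.RR n) (Inv2.SR (Inv2.RR n))) =
        Pi.evalRingHom (fun _ : Inv2.XX n => ℂ) ξ := by
      ext r
      simp [Inv2.ev, MvPolynomial.algebraMap_eq]
    rw [e]
    have := Polynomial.eval₂_at_apply (p := MvPolynomial.aeval (Inv2.svals n) P)
      (Pi.evalRingHom (fun _ : Inv2.XX n => ℂ) ξ) 1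
    rw [map_one] at this
    exact this
  have hFB : F ∈ Inv2.BB n := by
    rw [hF, Polynomial.eval_eq_sum]
    refine sum_mem fun k _ => ?_
    simpa using hcoef k
  have hFT : Inv2.TT n F = F := by
    funext ξ
    have h := hinv ⟨(2 : ℂ) • 1, (2 : ℂ)⁻¹ • 1, by simp, by simp⟩ ξ.1 ξ.2.1 ξ.2.2
    refine Eq.trans ?_ h
    change f ((2 : ℂ)⁻¹ • ξ.1) ((2 : ℂ) • ξ.2.1) ξ.2.2 = _
    simp
  have hFA : F ∈ Inv2.AA n :=
    Inv2.weight_zero (Inv2.AA n) (Inv2.Ys n) (Inv2.Zs n) (Inv2.Ys_mul_Zs n) (Inv2.TT n)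
      (Inv2.TT_A n) (Inv2.TT_Ys n) (Inv2.TT_Zs n) F hFB hFT
  rw [Inv2.AA, Algebra.adjoin_range_eq_range_aeval] at hFA
  obtain ⟨Q, hQ⟩ := hFA
  refine ⟨Q, fun x y p => ?_⟩
  have h := congrFun hQ (x, y, p)
  refine h.symm.trans ?_
  have hev : ∀ Q : MvPolynomial ((Fin n × Fin n) ⊕ (Fin n × Fin n) ⊕ Fin 2) ℂ,
      (MvPolynomial.aeval (Inv2.gens n) Q) (x, y, p) =
        MvPolynomial.eval (fun i => Inv2.gens n i (x, y, p)) Q := by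
    intro Q
    induction Q using MvPolynomial.induction_on with
    | C a => simp
    | add p q hp hq => simp [hp, hq]
    | mul_X p i hp => simp [hp]
  refine (hev Q).trans ?_
  congr 2
  funext i
  rcases i with ⟨i, j⟩ | ⟨i, j⟩ | i
  · simp [Inv2.gens, Matrix.mul_apply, Inv2.xx, Inv2.yy]
  · simp [Inv2.gens, Matrix.mul_apply, Inv2.xx, Inv2.yy, Inv2.pp]
  · fin_cases i
    · simp [Inv2.gens, Matrix.det_fin_two, Inv2.pp]
    · simp [Inv2.gens, Matrix.trace, Inv2.pp]
end

section
/- Let S₁, S₂ be 2-dimensional complex vector spaces. The variety {(p₁, p₂, a) ∈ End(S₁) × End(S₂) × Hom(S₂,S₁) : a p₂ = p₁ a} is a union of irreducible closed subvarieties indexed by rank conditions on a, and in particular it is reducible; the closure of the locus where a is invertible is strictly contained in it and is cut out inside it by the additional equations det(p₁) = det(p₂) and Tr(p₁) = Tr(p₂). -/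
noncomputable section

/-- Points `(p₁, p₂, a) ∈ End(S₁) × End(S₂) × Hom(S₂,S₁)`, all 2×2 matrices. -/
abbrev Pt7 := Matrix (Fin 2) (Fin 2) ℂ × Matrix (Fin 2) (Fin 2) ℂ ×
  Matrix (Fin 2) (Fin 2) ℂ

abbrev Idx7 := (Fin 2 × Fin 2) ⊕ (Fin 2 × Fin 2) ⊕ (Fin 2 × Fin 2)

/-- Coordinates of a point, for evaluating polynomials on `ℂ¹²`. -/
def coords7 (t : Pt7) : Idx7 → ℂ :=
  Sum.elim (fun ij => t.1 ij.1 ij.2)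
    (Sum.elim (fun ij => t.2.1 ij.1 ij.2) (fun ij => t.2.2 ij.1 ij.2))

/-- `f` vanishes identically on the set `S`. -/
def VanishOn (f : MvPolynomial Idx7 ℂ) (S : Set Pt7) : Prop :=
  ∀ t ∈ S, MvPolynomial.eval (coords7 t) f = 0

/-- Zariski closure of a subset of `ℂ¹²`. -/
def zcl (S : Set Pt7) : Set Pt7 :=
  {t | ∀ f : MvPolynomial Idx7 ℂ, VanishOn f S → MvPolynomial.eval (coords7 t) f = 0}

/-- The intertwiner variety `{(p₁,p₂,a) : a p₂ = p₁ a}`. -/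
def X7 : Set Pt7 := {t | t.2.2 * t.2.1 = t.1 * t.2.2}

def PolyFn {σ : Type} (F : (σ → ℂ) → ℂ) : Prop :=
  ∃ p : MvPolynomial σ ℂ, ∀ x, MvPolynomial.eval x p = F x

lemma PolyFn.const {σ : Type} (c : ℂ) : PolyFn (fun _ : σ → ℂ => c) := ⟨MvPolynomial.C c, by simp⟩
lemma PolyFn.var {σ : Type} (i : σ) : PolyFn (fun x : σ → ℂ => x i) := ⟨MvPolynomial.X i, by simp⟩
lemma PolyFn.add {σ : Type} {F G : (σ → ℂ) → ℂ} (hF : PolyFn F) (hG : PolyFn G) :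
    PolyFn (fun x => F x + G x) := by
  obtain ⟨p, hp⟩ := hF
  obtain ⟨q, hq⟩ := hG
  exact ⟨p + q, by simp [hp, hq]⟩
lemma PolyFn.sub {σ : Type} {F G : (σ → ℂ) → ℂ} (hF : PolyFn F) (hG : PolyFn G) :
    PolyFn (fun x => F x - G x) := by
  obtain ⟨p, hp⟩ := hF
  obtain ⟨q, hq⟩ := hG
  exact ⟨p - q, by simp [hp, hq]⟩
lemma PolyFn.neg {σ : Type} {F : (σ → ℂ) → ℂ} (hF : PolyFn F) :
    PolyFn (fun x => - F x) := by
  obtain ⟨p, hp⟩ := hF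
  exact ⟨- p, by simp [hp]⟩
lemma PolyFn.mul {σ : Type} {F G : (σ → ℂ) → ℂ} (hF : PolyFn F) (hG : PolyFn G) :
    PolyFn (fun x => F x * G x) := by
  obtain ⟨p, hp⟩ := hF
  obtain ⟨q, hq⟩ := hG
  exact ⟨p * q, by simp [hp, hq]⟩

lemma subset_zcl (S : Set Pt7) : S ⊆ zcl S := fun t ht f hf => hf t ht

lemma vanish_zcl (f : MvPolynomial Idx7 ℂ) (S : Set Pt7) : VanishOn f (zcl S) ↔ VanishOn f S :=
  ⟨fun h t ht => h t (subset_zcl S ht), fun h t ht => ht f h⟩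

lemma zcl_mono_closed {S T : Set Pt7} (h : S ⊆ zcl T) : zcl S ⊆ zcl T := by
  intro t ht f hf
  exact ht f (fun s hs => h hs f hf)

/-- The image of a principal open set under a polynomial map is irreducible. -/
lemma irred_of_param {σ : Type} (φ : (σ → ℂ) → Pt7) (d : (σ → ℂ) → ℂ)
    (hφ : ∀ i, PolyFn (fun x => coords7 (φ x) i)) (hd : PolyFn d) (hd0 : ∃ x, d x ≠ 0)
    (S : Set Pt7) (h1 : ∀ x, d x ≠ 0 → φ x ∈ S) (h2 : ∀ t ∈ S, ∃ x, φ x = t)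
    (f g : MvPolynomial Idx7 ℂ) (hfg : VanishOn (f * g) (zcl S)) :
    VanishOn f (zcl S) ∨ VanishOn g (zcl S) := by
  rw [vanish_zcl] at *
  rw [vanish_zcl]
  choose F hF using hφ
  obtain ⟨D, hD⟩ := hd
  have key : ∀ (f : MvPolynomial Idx7 ℂ) x, MvPolynomial.eval x (MvPolynomial.bind₁ F f) =
      MvPolynomial.eval (coords7 (φ x)) f := by
    intro f x
    have : coords7 (φ x) = fun i => MvPolynomial.eval x (F i) := by
      funext i; rw [hF]
    rw [this]
    simp only [← MvPolynomial.coe_aeval_eq_eval, RingHom.coe_coe, MvPolynomial.aeval_bind₁]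
  have hz : MvPolynomial.bind₁ F f * MvPolynomial.bind₁ F g * D = 0 := by
    apply MvPolynomial.funext
    intro x
    by_cases hx : d x = 0
    · simp [hD, hx]
    · have := hfg _ (h1 x hx)
      rw [map_mul] at this
      rw [map_mul, map_mul, key, key, this]
      simp
  have hD0 : D ≠ 0 := by
    rintro rfl
    obtain ⟨x, hx⟩ := hd0
    exact hx (by rw [← hD]; simp)
  have hz' := (mul_eq_zero.1 hz).resolve_right hD0
  rcases mul_eq_zero.1 hz' with h | h
  · left
    intro t ht
    obtain ⟨x, rfl⟩ := h2 t ht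
    rw [← key, h, map_zero]
  · right
    intro t ht
    obtain ⟨x, rfl⟩ := h2 t ht
    rw [← key, h, map_zero]

/-- limits along affine lines -/
lemma line_mem_zcl (S : Set Pt7) (x y : Pt7) (q : Polynomial ℂ) (hq : q ≠ 0)
    (h : ∀ s : ℂ, q.eval s ≠ 0 → x + s • y ∈ S) : x ∈ zcl S := by
  intro f hf
  let P : Polynomial ℂ := MvPolynomial.aeval
    (fun i => Polynomial.C (coords7 x i) + Polynomial.X * Polynomial.C (coords7 y i)) f
  have hP : ∀ s : ℂ, P.eval s = MvPolynomial.eval (coords7 (x + s • y)) f := by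
    intro s
    have hc : coords7 (x + s • y) = fun i => coords7 x i + s * coords7 y i := by
      funext i
      rcases i with i | i | i <;> simp [coords7]
    have e : (Polynomial.aeval s).comp (MvPolynomial.aeval (R := ℂ)
        (fun i => Polynomial.C (coords7 x i) + Polynomial.X * Polynomial.C (coords7 y i))) =
        MvPolynomial.aeval (R := ℂ) (coords7 (x + s • y)) := by
      apply MvPolynomial.algHom_ext
      intro i
      simp [hc]
      ring
    have := congrArg (fun k => k f) e
    rw [← MvPolynomial.coe_aeval_eq_eval, ← Polynomial.coe_aeval_eq_eval]
    exact this
  have hPq : P * q = 0 := by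
    apply Polynomial.funext
    intro s
    by_cases hs : q.eval s = 0
    · simp [hs]
    · rw [Polynomial.eval_mul, hP, hf _ (h s hs)]
      simp
  have := (mul_eq_zero.1 hPq).resolve_right hq
  have h0 := hP 0
  rw [this] at h0
  simpa using h0.symm

lemma closed_of_poly (S : Set Pt7) (F G : Pt7 → ℂ) (p : MvPolynomial Idx7 ℂ)
    (hp : ∀ t, MvPolynomial.eval (coords7 t) p = F t - G t) (h : ∀ t ∈ S, F t = G t) :
    ∀ t ∈ zcl S, F t = G t := by
  intro t ht
  have := ht p (fun s hs => by rw [hp, h s hs, sub_self])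
  rw [hp] at this
  exact sub_eq_zero.1 this

abbrev x1 (i j : Fin 2) : MvPolynomial Idx7 ℂ := MvPolynomial.X (Sum.inl (i, j))
abbrev x2 (i j : Fin 2) : MvPolynomial Idx7 ℂ := MvPolynomial.X (Sum.inr (Sum.inl (i, j)))
abbrev x3 (i j : Fin 2) : MvPolynomial Idx7 ℂ := MvPolynomial.X (Sum.inr (Sum.inr (i, j)))

lemma zcl_sub_X7 (S : Set Pt7) (hS : S ⊆ X7) : zcl S ⊆ X7 := by
  intro t ht
  show t.2.2 * t.2.1 = t.1 * t.2.2
  ext i j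
  refine closed_of_poly S (fun t => (t.2.2 * t.2.1) i j) (fun t => (t.1 * t.2.2) i j)
    (x3 i 0 * x2 0 j + x3 i 1 * x2 1 j - (x1 i 0 * x3 0 j + x1 i 1 * x3 1 j)) ?_ ?_ t ht
  · intro t
    simp [coords7, Matrix.mul_apply, Fin.sum_univ_two]
  · intro t ht
    have : t.2.2 * t.2.1 = t.1 * t.2.2 := hS ht
    simp only [this]

abbrev M2 := Matrix (Fin 2) (Fin 2) ℂ

lemma det_eq_of (p q a : M2) (h : a * q = p * a) (ha : a.det ≠ 0) : p.det = q.det := by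
  have := congrArg Matrix.det h
  rw [Matrix.det_mul, Matrix.det_mul, mul_comm] at this
  exact (mul_right_cancel₀ ha this).symm

lemma trace_eq_of (p q a : M2) (h : a * q = p * a) (ha : a.det ≠ 0) : p.trace = q.trace := by
  have h1 : (a.adjugate * (a * q)).trace = a.det * q.trace := by
    rw [← mul_assoc, Matrix.adjugate_mul]; simp
  have h2 : (a.adjugate * (p * a)).trace = a.det * p.trace := by
    rw [Matrix.trace_mul_comm, mul_assoc, Matrix.mul_adjugate]; simp
  rw [h, h2] at h1
  exact mul_left_cancel₀ ha h1

lemma rank_two_iff (a : M2) : a.rank = 2 ↔ a.det ≠ 0 := by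
  rw [← isUnit_iff_ne_zero, ← Matrix.isUnit_iff_isUnit_det]
  constructor
  · intro h
    rw [← Matrix.mulVec_surjective_iff_isUnit]
    have ht : LinearMap.range a.mulVecLin = ⊤ := by
      apply Submodule.eq_top_of_finrank_eq
      rw [← Matrix.rank, h]
      simp
    exact LinearMap.range_eq_top.1 ht
  · intro h
    simpa using Matrix.rank_of_isUnit a h

lemma mrank_zero_iff (a : M2) : a.rank = 0 ↔ a = 0 := by
  constructor
  · intro h
    rw [Matrix.rank, Submodule.finrank_eq_zero, LinearMap.range_eq_bot] at h
    apply Matrix.toLin'.injective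
    rw [map_zero]
    exact h
  · rintro rfl
    exact Matrix.rank_zero

lemma rank_le_two (a : M2) : a.rank ≤ 2 := by
  simpa using Matrix.rank_le_card_width a

lemma rank_one_iff (a : M2) : a.rank = 1 ↔ a ≠ 0 ∧ a.det = 0 := by
  have h0 := mrank_zero_iff a
  have h2 := rank_two_iff a
  have := rank_le_two a
  constructor
  · intro h
    constructor
    · rw [Ne, ← h0]; omega
    · by_contra hh
      have := h2.2 hh
      omega
  · rintro ⟨ha, hb⟩
    have : a.rank ≠ 0 := fun h => ha (h0.1 h)
    have : a.rank ≠ 2 := fun h => h2.1 h hb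
    omega

lemma exists_cyclic (p : M2) (hp : ¬ ∃ c : ℂ, p = c • 1) :
    ∃ P : M2, P.det ≠ 0 ∧ p * P = P * !![0, -p.det; 1, p.trace] := by
  have hv : ∃ x y : ℂ, x * (p 1 0 * x + p 1 1 * y) - y * (p 0 0 * x + p 0 1 * y) ≠ 0 := by
    by_contra! hh
    have e1 := hh 1 0
    have e2 := hh 0 1
    have e3 := hh 1 1
    simp at e1 e2
    simp [e1, e2] at e3
    apply hp
    refine ⟨p 0 0, ?_⟩
    ext i j
    fin_cases i <;> fin_cases j <;> simp [e1, e2]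
    linear_combination e3
  obtain ⟨x, y, hxy⟩ := hv
  refine ⟨!![x, p 0 0 * x + p 0 1 * y; y, p 1 0 * x + p 1 1 * y], ?_, ?_⟩
  · rw [Matrix.det_fin_two_of]
    intro h
    apply hxy
    linear_combination h
  · ext i j
    fin_cases i <;> fin_cases j <;>
      simp [Matrix.mul_apply, Fin.sum_univ_two, Matrix.det_fin_two, Matrix.trace_fin_two] <;> ring

lemma exists_inv_intertwiner (p q : M2) (hp : ¬ ∃ c : ℂ, p = c • 1) (hq : ¬ ∃ c : ℂ, q = c • 1)
    (hd : p.det = q.det) (ht : p.trace = q.trace) : ∃ b : M2, b.det ≠ 0 ∧ b * q = p * b := by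
  obtain ⟨P, hP, eP⟩ := exists_cyclic p hp
  obtain ⟨Q, hQ, eQ⟩ := exists_cyclic q hq
  rw [hd, ht] at eP
  have hQu : IsUnit Q.det := isUnit_iff_ne_zero.2 hQ
  refine ⟨P * Q⁻¹, ?_, ?_⟩
  · rw [Matrix.det_mul, Matrix.det_nonsing_inv]
    simp [hP, hQ]
  · set C : M2 := !![0, -q.det; 1, q.trace]
    have : Q⁻¹ * q = C * Q⁻¹ := by
      calc Q⁻¹ * q = Q⁻¹ * (q * Q) * Q⁻¹ := by
            rw [← mul_assoc, Matrix.mul_nonsing_inv_cancel_right _ _ hQu]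
        _ = C * Q⁻¹ := by rw [eQ, Matrix.nonsing_inv_mul_cancel_left _ _ hQu]
    rw [mul_assoc, this, ← mul_assoc, ← mul_assoc, eP]

/-- If an invertible intertwiner exists, we are in the closure. -/
lemma mem_of_inv (p q a b : M2) (h : a * q = p * a) (hb : b.det ≠ 0) (h' : b * q = p * b) :
    ((p, q, a) : Pt7) ∈ zcl {t ∈ X7 | IsUnit t.2.2} := by
  let Q : Polynomial ℂ := (Polynomial.C (a 0 0) + Polynomial.X * Polynomial.C (b 0 0)) *
      (Polynomial.C (a 1 1) + Polynomial.X * Polynomial.C (b 1 1)) -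
      (Polynomial.C (a 0 1) + Polynomial.X * Polynomial.C (b 0 1)) *
      (Polynomial.C (a 1 0) + Polynomial.X * Polynomial.C (b 1 0))
  have hQ : ∀ s, Q.eval s = (a + s • b).det := by
    intro s
    simp [Q, Matrix.det_fin_two]
    ring
  have hQ0 : Q ≠ 0 := by
    intro h0
    have e0 := hQ 0
    have e1 := hQ 1
    have e2 := hQ (-1)
    rw [h0] at e0 e1 e2
    simp [Matrix.det_fin_two] at e0 e1 e2
    apply hb
    rw [Matrix.det_fin_two]
    linear_combination -(1/2) * e1 - (1/2) * e2 + e0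
  refine line_mem_zcl _ _ (0, 0, b) Q hQ0 ?_
  intro s hs
  rw [hQ] at hs
  constructor
  · show (a + s • b) * (q + s • 0) = (p + s • 0) * (a + s • b)
    simp [add_mul, mul_add, h, h']
  · show IsUnit (a + s • b)
    rw [Matrix.isUnit_iff_isUnit_det]
    exact isUnit_iff_ne_zero.2 hs

lemma exists_nil_left (a : M2) (ha : a.det = 0) :
    ∃ M : M2, M ≠ 0 ∧ M.trace = 0 ∧ M.det = 0 ∧ M * a = 0 := by
  obtain ⟨w, hw, hwa⟩ := Matrix.exists_vecMul_eq_zero_iff.2 ha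
  have h0 := congrFun hwa 0
  have h1 := congrFun hwa 1
  simp [Matrix.vecMul, dotProduct, Fin.sum_univ_two] at h0 h1
  refine ⟨!![w 1 * w 0, w 1 * w 1; - (w 0 * w 0), - (w 0 * w 1)], ?_, ?_, ?_, ?_⟩
  · intro h
    have e1 := congrFun (congrFun h 0) 1
    have e2 := congrFun (congrFun h 1) 0
    simp at e1 e2
    apply hw
    ext i
    fin_cases i <;> simp [e1, e2]
  · simp [Matrix.trace_fin_two]; ring
  · simp [Matrix.det_fin_two]; ring
  · ext i j
    fin_cases i <;> fin_cases j <;> simp [Matrix.mul_apply, Fin.sum_univ_two]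
    · linear_combination w 1 * h0
    · linear_combination w 1 * h1
    · linear_combination -w 0 * h0
    · linear_combination -w 0 * h1

lemma exists_nil_right (a : M2) (ha : a.det = 0) :
    ∃ M : M2, M ≠ 0 ∧ M.trace = 0 ∧ M.det = 0 ∧ a * M = 0 := by
  obtain ⟨M, h1, h2, h3, h4⟩ := exists_nil_left a.transpose (by rwa [Matrix.det_transpose])
  refine ⟨M.transpose, by simpa using h1, by simpa using h2, by simpa using h3, ?_⟩
  rw [← Matrix.transpose_inj]
  simpa using h4

lemma pert (c s : ℂ) (M : M2) (h0 : M ≠ 0) (ht : M.trace = 0) (hd : M.det = 0) (hs : s ≠ 0) :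
    (c • (1 : M2) + s • M).det = (c • (1 : M2)).det ∧
    (c • (1 : M2) + s • M).trace = (c • (1 : M2)).trace ∧
    ¬ ∃ e : ℂ, c • (1 : M2) + s • M = e • 1 := by
  refine ⟨?_, by simp [ht], ?_⟩
  · simp [Matrix.det_fin_two, Matrix.trace_fin_two] at *
    linear_combination s^2 * hd + c * s * ht
  · rintro ⟨e, he⟩
    have e1 := congrFun (congrFun he 0) 1
    have e2 := congrFun (congrFun he 1) 0
    have e3 := congrFun (congrFun he 0) 0
    have e4 := congrFun (congrFun he 1) 1
    simp [hs, Matrix.trace_fin_two] at e1 e2 e3 e4 ht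
    have e5 : M 0 0 = 0 := by
      have : s * (2 * M 0 0) = 0 := by linear_combination e3 - e4 + s * ht
      simpa [hs] using this
    have e6 : M 1 1 = 0 := by linear_combination ht - e5
    apply h0
    ext i j
    fin_cases i <;> fin_cases j <;> simp [e1, e2, e5, e6]

lemma mem_zcl_inv (p q a : M2) (h : a * q = p * a) (hd : p.det = q.det)
    (ht : p.trace = q.trace) : ((p, q, a) : Pt7) ∈ zcl {t ∈ X7 | IsUnit t.2.2} := by
  by_cases ha : a.det ≠ 0
  · exact mem_of_inv p q a a h ha h
  push Not at ha
  by_cases hp : ∃ c : ℂ, p = c • 1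
  · obtain ⟨c, rfl⟩ := hp
    by_cases hq : ∃ e : ℂ, q = e • 1
    · obtain ⟨e, rfl⟩ := hq
      have : c = e := by simpa using ht
      subst this
      exact mem_of_inv _ _ a 1 h (by simp) (by simp)
    · obtain ⟨M, h1, h2, h3, h4⟩ := exists_nil_left a ha
      refine zcl_mono_closed (S := zcl {t ∈ X7 | IsUnit t.2.2}) subset_rfl ?_
      refine line_mem_zcl _ _ (M, 0, 0) Polynomial.X Polynomial.X_ne_zero ?_
      intro s hs
      simp at hs
      obtain ⟨k1, k2, k3⟩ := pert c s M h1 h2 h3 hs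
      have hX : a * q = (c • (1 : M2) + s • M) * a := by simp [add_mul, h, h4]
      obtain ⟨b, hb, hb'⟩ := exists_inv_intertwiner _ q k3 hq (k1.trans hd) (k2.trans ht)
      have := mem_of_inv _ _ a b hX hb hb'
      simpa using this
  · by_cases hq : ∃ e : ℂ, q = e • 1
    · obtain ⟨e, rfl⟩ := hq
      obtain ⟨M, h1, h2, h3, h4⟩ := exists_nil_right a ha
      refine zcl_mono_closed (S := zcl {t ∈ X7 | IsUnit t.2.2}) subset_rfl ?_
      refine line_mem_zcl _ _ (0, M, 0) Polynomial.X Polynomial.X_ne_zero ?_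
      intro s hs
      simp at hs
      obtain ⟨k1, k2, k3⟩ := pert e s M h1 h2 h3 hs
      have hX : a * (e • (1 : M2) + s • M) = p * a := by rw [← h]; simp [mul_add, h4]
      obtain ⟨b, hb, hb'⟩ := exists_inv_intertwiner p _ hp k3 (hd.trans k1.symm) (ht.trans k2.symm)
      have := mem_of_inv _ _ a b hX hb hb'
      simpa using this
    · obtain ⟨b, hb, hb'⟩ := exists_inv_intertwiner p q hp hq hd ht
      exact mem_of_inv _ _ a b h hb hb'

lemma zcl_inv_eq : zcl {t ∈ X7 | IsUnit t.2.2} =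
      {t ∈ X7 | t.1.det = t.2.1.det ∧ t.1.trace = t.2.1.trace} := by
  apply Set.Subset.antisymm
  · intro t ht
    have hu : ∀ a : M2, IsUnit a → a.det ≠ 0 := fun a ha =>
      isUnit_iff_ne_zero.1 ((Matrix.isUnit_iff_isUnit_det a).1 ha)
    refine ⟨zcl_sub_X7 _ (fun t ht => ht.1) ht, ?_, ?_⟩
    · refine closed_of_poly _ (fun t => t.1.det) (fun t => t.2.1.det)
        (x1 0 0 * x1 1 1 - x1 0 1 * x1 1 0 - (x2 0 0 * x2 1 1 - x2 0 1 * x2 1 0)) ?_ ?_ t ht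
      · intro t
        simp [coords7, Matrix.det_fin_two]
      · intro t ht
        exact det_eq_of _ _ _ ht.1 (hu _ ht.2)
    · refine closed_of_poly _ (fun t => t.1.trace) (fun t => t.2.1.trace)
        (x1 0 0 + x1 1 1 - (x2 0 0 + x2 1 1)) ?_ ?_ t ht
      · intro t
        simp [coords7, Matrix.trace_fin_two]
      · intro t ht
        exact trace_eq_of _ _ _ ht.1 (hu _ ht.2)
  · rintro ⟨p, q, a⟩ ⟨h, hd, ht⟩
    exact mem_zcl_inv p q a h hd ht

/-- parametrizations -/
def phi0 (x : Fin 8 → ℂ) : Pt7 := (!![x 0, x 1; x 2, x 3], !![x 4, x 5; x 6, x 7], 0)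

def phi2 (x : Fin 8 → ℂ) : Pt7 :=
  (!![x 0, x 1; x 2, x 3] * !![x 4, x 5; x 6, x 7] * !![x 3, - x 1; - x 2, x 0],
    (x 0 * x 3 - x 1 * x 2) • !![x 4, x 5; x 6, x 7], !![x 0, x 1; x 2, x 3])

def phi1 (x : Fin 13 → ℂ) : Pt7 :=
  (!![x 0, x 1; x 2, x 3] * !![x 8 * (x 4 * x 7 - x 5 * x 6), x 9; 0, x 10] *
      !![x 3, - x 1; - x 2, x 0],
    !![x 7, - x 5; - x 6, x 4] * !![x 8 * (x 0 * x 3 - x 1 * x 2), 0; x 11, x 12] *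
      !![x 4, x 5; x 6, x 7],
    !![x 0, x 1; x 2, x 3] * !![1, 0; 0, 0] * !![x 4, x 5; x 6, x 7])

lemma irr0 (f g : MvPolynomial Idx7 ℂ) (h : VanishOn (f * g) (zcl {t ∈ X7 | t.2.2.rank = 0})) :
    VanishOn f (zcl {t ∈ X7 | t.2.2.rank = 0}) ∨ VanishOn g (zcl {t ∈ X7 | t.2.2.rank = 0}) := by
  refine irred_of_param phi0 (fun _ => 1) ?_ (PolyFn.const 1) ⟨0, by simp⟩ _ ?_ ?_ f g h
  · rintro (⟨i, j⟩ | ⟨i, j⟩ | ⟨i, j⟩) <;> fin_cases i <;> fin_cases j <;>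
      simp [coords7, phi0] <;>
      repeat' first | exact PolyFn.var _ | exact PolyFn.const _
  · intro x _
    simp [X7, phi0, mrank_zero_iff]
  · rintro ⟨p, q, a⟩ ⟨_, hr⟩
    rw [mrank_zero_iff] at hr
    simp at hr
    subst hr
    refine ⟨![p 0 0, p 0 1, p 1 0, p 1 1, q 0 0, q 0 1, q 1 0, q 1 1], ?_⟩
    simp [phi0, ← Matrix.eta_fin_two]

lemma adj_eq (a b c d : ℂ) : !![d, -b; -c, a] = (!![a, b; c, d] : M2).adjugate := by
  simp [Matrix.adjugate_fin_two]

lemma irr2 (f g : MvPolynomial Idx7 ℂ) (h : VanishOn (f * g) (zcl {t ∈ X7 | t.2.2.rank = 2})) :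
    VanishOn f (zcl {t ∈ X7 | t.2.2.rank = 2}) ∨ VanishOn g (zcl {t ∈ X7 | t.2.2.rank = 2}) := by
  refine irred_of_param phi2 (fun x => x 0 * x 3 - x 1 * x 2) ?_ ?_
    ⟨![1, 0, 0, 1, 0, 0, 0, 0], by simp⟩ _ ?_ ?_ f g h
  · rintro (⟨i, j⟩ | ⟨i, j⟩ | ⟨i, j⟩) <;> fin_cases i <;> fin_cases j <;>
      simp [coords7, phi2, Matrix.mul_apply, Fin.sum_univ_two] <;>
      repeat' first | exact PolyFn.var _ | exact PolyFn.const _ | apply PolyFn.add |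
        apply PolyFn.sub | apply PolyFn.neg | apply PolyFn.mul
  · repeat' first | exact PolyFn.var _ | apply PolyFn.sub | apply PolyFn.mul
  · intro x hx
    constructor
    · simp only [X7, phi2, Set.mem_ofPred_eq]
      rw [adj_eq, mul_assoc, Matrix.adjugate_mul, Matrix.det_fin_two_of, mul_assoc]
      rw [Matrix.mul_smul, Matrix.mul_smul, Matrix.mul_smul, mul_one]
    · rw [rank_two_iff]
      simpa [phi2, Matrix.det_fin_two] using hx
  · rintro ⟨p, q, a⟩ ⟨hX, hr⟩
    rw [rank_two_iff] at hr
    change a.det ≠ 0 at hr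
    change a * q = p * a at hX
    refine ⟨![a 0 0, a 0 1, a 1 0, a 1 1, q 0 0 / a.det, q 0 1 / a.det, q 1 0 / a.det,
      q 1 1 / a.det], ?_⟩
    have e : (!![q 0 0 / a.det, q 0 1 / a.det; q 1 0 / a.det, q 1 1 / a.det] : M2) =
        a.det⁻¹ • q := by
      ext i j
      fin_cases i <;> fin_cases j <;> simp [div_eq_inv_mul]
    have hA : (!![a 0 0, a 0 1; a 1 0, a 1 1] : M2) = a := (Matrix.eta_fin_two a).symm
    simp only [phi2]
    rw [adj_eq]
    change ((!![a 0 0, a 0 1; a 1 0, a 1 1] *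
      !![q 0 0 / a.det, q 0 1 / a.det; q 1 0 / a.det, q 1 1 / a.det] *
      (!![a 0 0, a 0 1; a 1 0, a 1 1] : M2).adjugate, (a 0 0 * a 1 1 - a 0 1 * a 1 0) •
      !![q 0 0 / a.det, q 0 1 / a.det; q 1 0 / a.det, q 1 1 / a.det],
      !![a 0 0, a 0 1; a 1 0, a 1 1]) : Pt7) = _
    rw [e, hA, ← Matrix.det_fin_two]
    refine Prod.ext ?_ (Prod.ext ?_ rfl)
    · simp [hX, mul_assoc, Matrix.mul_adjugate, smul_smul, hr]
    · simp [smul_smul, hr]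

lemma exists_gh (a : M2) (h0 : a ≠ 0) (hd : a.det = 0) :
    ∃ g h : M2, g.det ≠ 0 ∧ h.det ≠ 0 ∧ a = g * !![1, 0; 0, 0] * h := by
  rw [Matrix.det_fin_two] at hd
  by_cases h00 : a 0 0 ≠ 0
  · refine ⟨!![a 0 0, 0; a 1 0, 1], !![1, a 0 1 / a 0 0; 0, 1], by simpa, by simp, ?_⟩
    ext i j
    fin_cases i <;> fin_cases j <;> simp [Matrix.mul_apply, Fin.sum_univ_two] <;> field_simp
    linear_combination hd
  push Not at h00
  by_cases h01 : a 0 1 ≠ 0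
  · have : a 1 0 = 0 := by simpa [h00, h01] using hd
    refine ⟨!![a 0 1, 0; a 1 1, 1], !![0, 1; 1, 0], by simpa, by simp, ?_⟩
    ext i j
    fin_cases i <;> fin_cases j <;> simp [Matrix.mul_apply, Fin.sum_univ_two, h00, this]
  push Not at h01
  by_cases h10 : a 1 0 ≠ 0
  · refine ⟨!![0, 1; 1, 0], !![a 1 0, a 1 1; 0, 1], by simp, by simpa, ?_⟩
    ext i j
    fin_cases i <;> fin_cases j <;> simp [Matrix.mul_apply, Fin.sum_univ_two, h00, h01]
  push Not at h10
  have h11 : a 1 1 ≠ 0 := by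
    intro h
    apply h0
    ext i j
    fin_cases i <;> fin_cases j <;> simp [h00, h01, h10, h]
  refine ⟨!![0, 1; 1, 0], !![0, a 1 1; 1, 0], by simp, by simpa, ?_⟩
  ext i j
  fin_cases i <;> fin_cases j <;> simp [Matrix.mul_apply, Fin.sum_univ_two, h00, h01, h10]

lemma conj_form (p q a g h gi hi E : M2) (g1 : g * gi = 1) (g2 : gi * g = 1) (h1 : h * hi = 1)
    (h2 : hi * h = 1) (e : a = g * E * h) (hX : a * q = p * a) :
    ∃ P Q : M2, p = g * P * gi ∧ q = hi * Q * h ∧ E * Q = P * E := by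
  refine ⟨gi * p * g, h * q * hi, ?_, ?_, ?_⟩
  · calc p = (g * gi) * p * (g * gi) := by rw [g1, one_mul, mul_one]
      _ = _ := by simp only [mul_assoc]
  · calc q = (hi * h) * q * (hi * h) := by rw [h2, one_mul, mul_one]
      _ = _ := by simp only [mul_assoc]
  · calc E * (h * q * hi) = (gi * g) * E * h * q * hi := by rw [g2, one_mul]; simp only [mul_assoc]
      _ = gi * (a * q) * hi := by rw [e]; simp only [mul_assoc]
      _ = gi * p * g * E * (h * hi) := by rw [hX, e]; simp only [mul_assoc]
      _ = _ := by rw [h1, mul_one]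

lemma irr1 (f g : MvPolynomial Idx7 ℂ) (h : VanishOn (f * g) (zcl {t ∈ X7 | t.2.2.rank = 1})) :
    VanishOn f (zcl {t ∈ X7 | t.2.2.rank = 1}) ∨ VanishOn g (zcl {t ∈ X7 | t.2.2.rank = 1}) := by
  refine irred_of_param phi1 (fun x => (x 0 * x 3 - x 1 * x 2) * (x 4 * x 7 - x 5 * x 6)) ?_ ?_
    ⟨![1, 0, 0, 1, 1, 0, 0, 1, 0, 0, 0, 0, 0], by simp⟩ _ ?_ ?_ f g h
  · rintro (⟨i, j⟩ | ⟨i, j⟩ | ⟨i, j⟩) <;> fin_cases i <;> fin_cases j <;>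
      simp [coords7, phi1, Matrix.mul_apply, Fin.sum_univ_two] <;>
      repeat' first | exact PolyFn.var _ | exact PolyFn.const _ | apply PolyFn.add |
        apply PolyFn.sub | apply PolyFn.neg | apply PolyFn.mul
  · repeat' first | exact PolyFn.var _ | apply PolyFn.sub | apply PolyFn.mul
  · intro x hx
    constructor
    · simp only [X7, phi1, Set.mem_ofPred_eq]
      ext i j
      fin_cases i <;> fin_cases j <;> simp [Matrix.mul_apply, Fin.sum_univ_two] <;> ring
    · rw [rank_one_iff]
      constructor
      · intro h0
        simp only [phi1] at h0
        have e : ∀ i j, (!![x 0, x 1; x 2, x 3] * !![1, 0; 0, 0] * !![x 4, x 5; x 6, x 7] : M2) i j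
          = 0 := by rw [h0]; simp
        have e00 := e 0 0
        have e01 := e 0 1
        have e10 := e 1 0
        have e11 := e 1 1
        simp only [Matrix.mul_apply, Fin.sum_univ_two] at e00 e01 e10 e11
        simp [-mul_eq_zero] at e00 e01 e10 e11
        apply hx
        linear_combination x 3 * x 7 * e00 - x 3 * x 6 * e01 - x 1 * x 7 * e10 + x 1 * x 6 * e11
      · simp [phi1]
        ring
  · rintro ⟨p, q, a⟩ ⟨hX, hr⟩
    rw [rank_one_iff] at hr
    obtain ⟨h0, hd⟩ := hr
    obtain ⟨g, h, hg, hh, e⟩ := exists_gh a h0 hd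
    change a * q = p * a at hX
    have hgu : IsUnit g.det := isUnit_iff_ne_zero.2 hg
    have hhu : IsUnit h.det := isUnit_iff_ne_zero.2 hh
    obtain ⟨P, Q, hP, hQ, hE⟩ := conj_form p q a g h g⁻¹ h⁻¹ !![1, 0; 0, 0]
      (Matrix.mul_nonsing_inv _ hgu) (Matrix.nonsing_inv_mul _ hgu)
      (Matrix.mul_nonsing_inv _ hhu) (Matrix.nonsing_inv_mul _ hhu) e hX
    have E00 := congrFun (congrFun hE 0) 0
    have E01 := congrFun (congrFun hE 0) 1
    have E10 := congrFun (congrFun hE 1) 0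
    simp [Matrix.mul_apply, Fin.sum_univ_two] at E00 E01 E10
    refine ⟨![g 0 0, g 0 1, g 1 0, g 1 1, h 0 0, h 0 1, h 1 0, h 1 1, P 0 0 / (g.det * h.det),
      P 0 1 / g.det, P 1 1 / g.det, Q 1 0 / h.det, Q 1 1 / h.det], ?_⟩
    have hG : (!![g 0 0, g 0 1; g 1 0, g 1 1] : M2) = g := (Matrix.eta_fin_two g).symm
    have hH : (!![h 0 0, h 0 1; h 1 0, h 1 1] : M2) = h := (Matrix.eta_fin_two h).symm
    simp only [phi1]
    rw [adj_eq, adj_eq]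
    change ((!![g 0 0, g 0 1; g 1 0, g 1 1] *
      !![P 0 0 / (g.det * h.det) * (h 0 0 * h 1 1 - h 0 1 * h 1 0), P 0 1 / g.det;
        0, P 1 1 / g.det] * (!![g 0 0, g 0 1; g 1 0, g 1 1] : M2).adjugate,
      (!![h 0 0, h 0 1; h 1 0, h 1 1] : M2).adjugate *
      !![P 0 0 / (g.det * h.det) * (g 0 0 * g 1 1 - g 0 1 * g 1 0), 0;
        Q 1 0 / h.det, Q 1 1 / h.det] * !![h 0 0, h 0 1; h 1 0, h 1 1],
      !![g 0 0, g 0 1; g 1 0, g 1 1] * !![1, 0; 0, 0] * !![h 0 0, h 0 1; h 1 0, h 1 1]) : Pt7) = _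
    rw [hG, hH, ← Matrix.det_fin_two, ← Matrix.det_fin_two]
    have e3 : (!![P 0 0 / (g.det * h.det) * h.det, P 0 1 / g.det; 0, P 1 1 / g.det] : M2) =
        g.det⁻¹ • P := by
      ext i j
      fin_cases i <;> fin_cases j <;> simp [← E10] <;> field_simp
    have e4 : (!![P 0 0 / (g.det * h.det) * g.det, 0; Q 1 0 / h.det, Q 1 1 / h.det] : M2) =
        h.det⁻¹ • Q := by
      ext i j
      fin_cases i <;> fin_cases j <;> simp [E01, E00] <;> field_simp
    rw [e3, e4]
    refine Prod.ext ?_ (Prod.ext ?_ e.symm)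
    · simp [hP, Matrix.inv_def]
    · simp [hQ, Matrix.inv_def]

lemma X7_reducible : ¬ ∀ f g : MvPolynomial Idx7 ℂ, VanishOn (f * g) X7 →
        VanishOn f X7 ∨ VanishOn g X7 := by
  intro H
  have hv : VanishOn ((x3 0 0 * x3 1 1 - x3 0 1 * x3 1 0) *
      (x1 0 0 + x1 1 1 - (x2 0 0 + x2 1 1))) X7 := by
    rintro ⟨p, q, a⟩ ht
    rw [map_mul]
    by_cases ha : a.det = 0
    · rw [Matrix.det_fin_two] at ha
      simp [coords7, ha]
    · have := trace_eq_of p q a ht ha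
      rw [Matrix.trace_fin_two, Matrix.trace_fin_two] at this
      simp [coords7, this]
  rcases H _ _ hv with h | h
  · have := h (0, 0, 1) (by simp [X7])
    simp [coords7] at this
  · have := h (1, 0, 0) (by simp [X7])
    simp [coords7] at this

/-- `X7` is the union of irreducible closed subvarieties indexed by the
rank of `a`; in particular it is reducible. The closure of the locus where `a` is
invertible is strictly contained in `X7`, and is cut out inside `X7` by the extra
equations `det p₁ = det p₂`, `Tr p₁ = Tr p₂`. -/
theorem stmt7 :
    -- union of the closures of the rank strata
    (X7 = zcl {t ∈ X7 | t.2.2.rank = 0} ∪ zcl {t ∈ X7 | t.2.2.rank = 1} ∪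
      zcl {t ∈ X7 | t.2.2.rank = 2}) ∧
    -- each stratum closure is irreducible
    (∀ r : ℕ, r ≤ 2 →
      ∀ f g : MvPolynomial Idx7 ℂ, VanishOn (f * g) (zcl {t ∈ X7 | t.2.2.rank = r}) →
        VanishOn f (zcl {t ∈ X7 | t.2.2.rank = r}) ∨
        VanishOn g (zcl {t ∈ X7 | t.2.2.rank = r})) ∧
    -- X7 itself is reducible
    (¬ ∀ f g : MvPolynomial Idx7 ℂ, VanishOn (f * g) X7 →
        VanishOn f X7 ∨ VanishOn g X7) ∧
    -- the closure of the invertible locus is cut out by the extra equations ...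
    (zcl {t ∈ X7 | IsUnit t.2.2} =
      {t ∈ X7 | t.1.det = t.2.1.det ∧ t.1.trace = t.2.1.trace}) ∧
    -- ... and is strictly contained in X7
    zcl {t ∈ X7 | IsUnit t.2.2} ⊂ X7 := by
  refine ⟨?_, ?_, X7_reducible, zcl_inv_eq, ?_⟩
  · apply Set.Subset.antisymm
    · intro t ht
      have := rank_le_two t.2.2
      have h3 : t.2.2.rank = 0 ∨ t.2.2.rank = 1 ∨ t.2.2.rank = 2 := by omega
      rcases h3 with h | h | h
      · exact Or.inl (Or.inl (subset_zcl _ ⟨ht, h⟩))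
      · exact Or.inl (Or.inr (subset_zcl _ ⟨ht, h⟩))
      · exact Or.inr (subset_zcl _ ⟨ht, h⟩)
    · refine Set.union_subset (Set.union_subset ?_ ?_) ?_ <;>
        exact zcl_sub_X7 _ (fun t ht => ht.1)
  · intro r hr
    interval_cases r
    · exact irr0
    · exact irr1
    · exact irr2
  · rw [zcl_inv_eq]
    refine ⟨fun t ht => ht.1, fun hsub => ?_⟩
    have := (hsub (show ((1, 0, 0) : Pt7) ∈ X7 by simp [X7])).2.2
    simp at this

end
end

section
/- Let S₁, S₂ be 2-dimensional complex vector spaces, H = Hom(S₂,S₁), and C = {(p₁,p₂,a) : a p₂ = p₁ a, det p₁ = det p₂, Tr p₁ = Tr p₂, with p₁, p₂ traceless replaced appropriately} realized as {(p,a) ∈ Λ²H × H : p∧p = 0, p∧a = 0}. Then the coordinate ring ℂ[C], as a graded module over the polynomial ring, has a finite free resolution of length 3 of the form (det H)⁻² → H^∨(det H)⁻¹ ⊕ (det H)⁻¹ → (det H)⁻¹ ⊕ Λ³H^∨ → O, equivariant for GL(H). -/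
noncomputable section

open MvPolynomial

/-- Polynomial ring on `Λ²H × H ≅ ℂ⁶ × ℂ⁴` for `H = ℂ⁴`. -/
abbrev R8 := MvPolynomial (Fin 6 ⊕ Fin 4) ℂ

/-- Index pairs: coordinate `s` of `Λ²H` is the coefficient of `e_i ∧ e_j`. -/
def idxPair : Fin 6 → Fin 4 × Fin 4 := ![(0,1), (0,2), (0,3), (1,2), (1,3), (2,3)]

/-- The Plücker relation `p ∧ p = 0`. -/
def pl8 : R8 := X (Sum.inl 0) * X (Sum.inl 5) - X (Sum.inl 1) * X (Sum.inl 4) +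
  X (Sum.inl 2) * X (Sum.inl 3)

/-- The four components of `p ∧ a ∈ Λ³H`. -/
def wedge8 : Fin 4 → R8 :=
  ![X (Sum.inl 0) * X (Sum.inr 2) - X (Sum.inl 1) * X (Sum.inr 1) +
      X (Sum.inl 3) * X (Sum.inr 0),
    X (Sum.inl 0) * X (Sum.inr 3) - X (Sum.inl 2) * X (Sum.inr 1) +
      X (Sum.inl 4) * X (Sum.inr 0),
    X (Sum.inl 1) * X (Sum.inr 3) - X (Sum.inl 2) * X (Sum.inr 2) +
      X (Sum.inl 5) * X (Sum.inr 0),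
    X (Sum.inl 3) * X (Sum.inr 3) - X (Sum.inl 4) * X (Sum.inr 2) +
      X (Sum.inl 5) * X (Sum.inr 1)]

/-- `C = {(p,a) : p ∧ p = 0, p ∧ a = 0}` in coordinates. -/
def C8 : Set (Fin 6 ⊕ Fin 4 → ℂ) :=
  {x | eval x pl8 = 0 ∧ ∀ i, eval x (wedge8 i) = 0}

/-- The vanishing ideal of `C`; the coordinate ring `ℂ[C]` is `R8 ⧸ J8`. -/
def J8 : Ideal R8 where
  carrier := {f | ∀ x ∈ C8, eval x f = 0}
  add_mem' := fun ha hb x hx => by simp [map_add, ha x hx, hb x hx]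
  zero_mem' := fun x hx => by simp
  smul_mem' := fun c f hf x hx => by simp [smul_eq_mul, map_mul, hf x hx]

/-- Substitution action of `m ∈ GL(H)` on the polynomial ring: the variables of
`Λ²H` transform by `Λ²m`, those of `H` by `m`. -/
def subst8 (m : Matrix (Fin 4) (Fin 4) ℂ) : R8 →ₐ[ℂ] R8 :=
  aeval (Sum.elim
    (fun s => ∑ t : Fin 6,
      C (m (idxPair s).1 (idxPair t).1 * m (idxPair s).2 (idxPair t).2 -
         m (idxPair s).1 (idxPair t).2 * m (idxPair s).2 (idxPair t).1) * X (Sum.inl t))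
    (fun i => ∑ j : Fin 4, C (m i j) * X (Sum.inr j)))

/-- Action of `g ∈ GL(H)` on `O` (functions). -/
def act0 (g : Matrix.GeneralLinearGroup (Fin 4) ℂ) (r : R8) : R8 :=
  subst8 (↑g⁻¹ : Matrix (Fin 4) (Fin 4) ℂ) r

/-- Action of `g` on the free module on `(det H)⁻¹ ⊕ Λ³H^∨`
(using `Λ³H^∨ ≅ H ⊗ (det H)⁻¹`). -/
def act1 (g : Matrix.GeneralLinearGroup (Fin 4) ℂ) (v : R8 × (Fin 4 → R8)) :
    R8 × (Fin 4 → R8) :=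
  (C (↑g⁻¹ : Matrix (Fin 4) (Fin 4) ℂ).det * act0 g v.1,
   fun i => C (↑g⁻¹ : Matrix (Fin 4) (Fin 4) ℂ).det *
     ∑ j : Fin 4, C ((↑g : Matrix (Fin 4) (Fin 4) ℂ) i j) * act0 g (v.2 j))

/-- Action of `g` on the free module on `H^∨ (det H)⁻¹ ⊕ (det H)⁻¹`. -/
def act2 (g : Matrix.GeneralLinearGroup (Fin 4) ℂ) (v : (Fin 4 → R8) × R8) :
    (Fin 4 → R8) × R8 :=
  (fun i => C (↑g⁻¹ : Matrix (Fin 4) (Fin 4) ℂ).det *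
     ∑ j : Fin 4, C ((↑g⁻¹ : Matrix (Fin 4) (Fin 4) ℂ) j i) * act0 g (v.1 j),
   C (↑g⁻¹ : Matrix (Fin 4) (Fin 4) ℂ).det * act0 g v.2)

/-- Action of `g` on the free module on `(det H)⁻²`. -/
def act3 (g : Matrix.GeneralLinearGroup (Fin 4) ℂ) (r : R8) : R8 :=
  C ((↑g⁻¹ : Matrix (Fin 4) (Fin 4) ℂ).det ^ 2) * act0 g r


/-! ### Divisibility by a variable -/

/-- Setting the variable `k` to zero. -/
def kill8 (k : Fin 6 ⊕ Fin 4) : R8 →ₐ[ℂ] R8 := aeval (fun i => if i = k then 0 else X i)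

theorem kill8_X (k i : Fin 6 ⊕ Fin 4) : kill8 k (X i) = if i = k then 0 else X i := by
  simp [kill8]

theorem kill8_dvd (k : Fin 6 ⊕ Fin 4) (f : R8) : ∃ g, f = kill8 k f + X k * g := by
  induction f using MvPolynomial.induction_on with
  | C a => exact ⟨0, by simp [kill8]⟩
  | add p q hp hq =>
    obtain ⟨g, hg⟩ := hp
    obtain ⟨h, hh⟩ := hq
    exact ⟨g + h, by rw [map_add]; linear_combination hg + hh⟩
  | mul_X p i hp =>
    obtain ⟨g, hg⟩ := hp
    rw [map_mul, kill8_X]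
    split_ifs with h
    · subst h
      exact ⟨p, by ring⟩
    · exact ⟨g * X i, by linear_combination X i * hg⟩

/-! ### Elimination of variables that occur linearly -/

/-- Setting all variables in `Y` to zero. -/
def killS8 (Y : Finset (Fin 6 ⊕ Fin 4)) : R8 →ₐ[ℂ] R8 :=
  aeval (fun i => if i ∈ Y then 0 else X i)

theorem killS8_X (Y : Finset (Fin 6 ⊕ Fin 4)) (i : Fin 6 ⊕ Fin 4) :
    killS8 Y (X i) = if i ∈ Y then 0 else X i := by
  simp [killS8]

theorem eval_killS8 (Y : Finset (Fin 6 ⊕ Fin 4)) (f : R8) (hf : killS8 Y f = f)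
    (pt pt' : Fin 6 ⊕ Fin 4 → ℂ) (h : ∀ i, i ∉ Y → pt i = pt' i) : eval pt f = eval pt' f := by
  have key : ∀ f : R8, eval pt (killS8 Y f) = eval pt' (killS8 Y f) := by
    intro f
    induction f using MvPolynomial.induction_on with
    | C a => simp [killS8]
    | add p q hp hq => simp [hp, hq]
    | mul_X p i hp =>
      rw [map_mul, map_mul, map_mul, hp, killS8_X]
      split_ifs with hi
      · simp
      · simp [h i hi]
  rw [← hf]
  exact key f

theorem elim8 (Y : Finset (Fin 6 ⊕ Fin 4)) (q : Fin 6 ⊕ Fin 4 → R8) (x : R8)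
    (hq : ∀ y ∈ Y, killS8 Y (q y) = q y) (hx : killS8 Y x = x) (u : R8) :
    ∃ (n : ℕ) (r : R8), killS8 Y r = r ∧
      x ^ n * u - r ∈ Ideal.span ((fun y => x * X y - q y) '' (Y : Set (Fin 6 ⊕ Fin 4))) := by
  induction u using MvPolynomial.induction_on with
  | C a => exact ⟨0, C a, by simp [killS8], by simp⟩
  | add p q hp hq =>
    obtain ⟨n, r, hr, h⟩ := hp
    obtain ⟨m, s, hs, h'⟩ := hq
    refine ⟨n + m, x ^ m * r + x ^ n * s, by simp [hr, hs, hx], ?_⟩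
    have := Ideal.add_mem _ (Ideal.mul_mem_left _ (x ^ m) h) (Ideal.mul_mem_left _ (x ^ n) h')
    convert this using 1
    ring
  | mul_X p i hp =>
    obtain ⟨n, r, hr, h⟩ := hp
    by_cases hi : i ∈ Y
    · refine ⟨n + 1, q i * r, by simp [hr, hq i hi], ?_⟩
      have h1 : x * X i - q i ∈
          Ideal.span ((fun y => x * X y - q y) '' (Y : Set (Fin 6 ⊕ Fin 4))) :=
        Ideal.subset_span ⟨i, hi, rfl⟩
      have := Ideal.add_mem _ (Ideal.mul_mem_left _ (x * X i) h) (Ideal.mul_mem_left _ r h1)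
      convert this using 1
      ring
    · refine ⟨n, r * X i, by simp [hr, killS8_X, hi], ?_⟩
      have := Ideal.mul_mem_left _ (X i) h
      convert this using 1
      ring

theorem elim8_mem (Y : Finset (Fin 6 ⊕ Fin 4)) (q : Fin 6 ⊕ Fin 4 → R8) (x g : R8)
    (hq : ∀ y ∈ Y, killS8 Y (q y) = q y) (hx : killS8 Y x = x) (hx0 : x ≠ 0)
    (hg : killS8 Y g = g) (hg0 : g ≠ 0) (u : R8)
    (hu : ∀ pt, eval pt x ≠ 0 → (∀ y ∈ Y, eval pt (x * X y - q y) = 0) → eval pt (g * u) = 0) :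
    ∃ n : ℕ, x ^ n * u ∈
      Ideal.span ((fun y => x * X y - q y) '' (Y : Set (Fin 6 ⊕ Fin 4))) := by
  obtain ⟨n, r, hr, h⟩ := elim8 Y q x hq hx u
  suffices hr0 : r = 0 by
    subst hr0
    exact ⟨n, by simpa using h⟩
  have hz : x * (g * r) = 0 := by
    apply MvPolynomial.funext
    intro pt
    rw [map_mul, map_zero]
    by_cases hpt : eval pt x = 0
    · rw [hpt, zero_mul]
    set pt' : Fin 6 ⊕ Fin 4 → ℂ := fun i => if i ∈ Y then eval pt (q i) / eval pt x else pt i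
      with hpt'
    have hag : ∀ i, i ∉ Y → pt i = pt' i := fun i hi => by simp [hpt', hi]
    have hx' := eval_killS8 Y x hx pt pt' hag
    have hvan : ∀ y ∈ Y, eval pt' (x * X y - q y) = 0 := by
      intro y hy
      rw [map_sub, map_mul, ← hx', ← eval_killS8 Y (q y) (hq y hy) pt pt' hag, eval_X]
      simp only [hpt', hy, if_true]
      field_simp
      ring
    have h1 := hu pt' (by rwa [← hx']) hvan
    have h2 : eval pt' (x ^ n * u - r) = 0 := by
      have : Ideal.span ((fun y => x * X y - q y) '' (Y : Set (Fin 6 ⊕ Fin 4))) ≤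
          RingHom.ker (eval pt') := by
        rw [Ideal.span_le]
        rintro _ ⟨y, hy, rfl⟩
        exact hvan y hy
      exact this h
    rw [eval_killS8 Y (g * r) (by rw [map_mul, hg, hr]) pt pt' hag]
    rw [map_mul] at h1
    rw [map_sub, map_mul] at h2
    rw [map_mul]
    linear_combination (-eval pt x * eval pt' g) * h2 + eval pt x * eval pt' (x ^ n) * h1
  rcases mul_eq_zero.1 hz with h | h
  · exact absurd h hx0
  rcases mul_eq_zero.1 h with h | h
  · exact absurd h hg0
  · exact h

/-- Koszul relations, up to a power of `x`, for a triple `x y₁ - q₁, x y₂ - q₂, f`. -/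
theorem koszul8 (y₁ y₂ : Fin 6 ⊕ Fin 4) (hy : y₁ ≠ y₂) (q₁ q₂ x f : R8)
    (hx : killS8 {y₁, y₂} x = x) (hx0 : x ≠ 0) (hq₁ : killS8 {y₁, y₂} q₁ = q₁)
    (hq₂ : killS8 {y₁, y₂} q₂ = q₂) (hf : killS8 {y₁, y₂} f = f) (hf0 : f ≠ 0)
    (hx' : killS8 {y₁} x = x) (hq₁' : killS8 {y₁} q₁ = q₁) (hq₂' : killS8 {y₁} q₂ = q₂)
    (f₁ f₂ u₁ u₂ u₃ : R8) (hf₁ : f₁ = x * X y₁ - q₁) (hf₂ : f₂ = x * X y₂ - q₂)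
    (hf₂0 : f₂ ≠ 0)
    (h : f₁ * u₁ + f₂ * u₂ + f * u₃ = 0) :
    ∃ (n : ℕ) (a b c : R8), x ^ n * u₁ = f₂ * c - f * a ∧ x ^ n * u₂ = - f₁ * c - f * b ∧
      x ^ n * u₃ = f₁ * a + f₂ * b := by
  obtain ⟨n, hn⟩ := elim8_mem {y₁, y₂} (fun i => if i = y₁ then q₁ else q₂) x f (by
      intro y hy'
      split_ifs
      · exact hq₁
      · exact hq₂) hx hx0 hf hf0 u₃ (by
      intro pt _ hpt
      have h1 := hpt y₁ (by simp)
      have h2 := hpt y₂ (by simp)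
      simp only [if_true, hy.symm, if_false] at h1 h2
      rw [← hf₁] at h1
      rw [← hf₂] at h2
      have := congrArg (eval pt) h
      simpa [h1, h2] using this)
  have himg : (fun y => x * X y - (if y = y₁ then q₁ else q₂)) ''
      (({y₁, y₂} : Finset (Fin 6 ⊕ Fin 4)) : Set (Fin 6 ⊕ Fin 4)) = {f₁, f₂} := by
    simp [Set.image_pair, hy.symm, hf₁, hf₂]
  rw [himg, Ideal.mem_span_pair] at hn
  obtain ⟨a, b, hab⟩ := hn
  have hK : f₁ * (x ^ n * u₁ + f * a) + f₂ * (x ^ n * u₂ + f * b) = 0 := by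
    linear_combination x ^ n * h + f * hab
  obtain ⟨m, hm⟩ := elim8_mem {y₁} (fun _ => q₁) x f₂ (by
      intro _ _
      exact hq₁') hx' hx0 (by
      rw [hf₂, map_sub, map_mul, hx', hq₂', killS8_X, if_neg (by simpa using hy.symm)])
      hf₂0 (x ^ n * u₂ + f * b) (by
      intro pt _ hpt
      have h1 := hpt y₁ (by simp)
      rw [← hf₁] at h1
      have := congrArg (eval pt) hK
      rw [map_add, map_mul, h1, zero_mul, zero_add, map_zero] at this
      exact this)
  have himg' : (fun y => x * X y - q₁) ''
      (({y₁} : Finset (Fin 6 ⊕ Fin 4)) : Set (Fin 6 ⊕ Fin 4)) = {f₁} := by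
    simp [hf₁]
  rw [himg', Ideal.mem_span_singleton'] at hm
  obtain ⟨c, hc⟩ := hm
  have hf₁0 : f₁ ≠ 0 := by
    intro h0
    have h1 := congrArg (killS8 {y₁}) h0
    rw [hf₁, map_sub, map_mul, hx', hq₁', killS8_X, if_pos (by simp), mul_zero, zero_sub, map_zero,
      neg_eq_zero] at h1
    rw [hf₁, h1, sub_zero] at h0
    rcases mul_eq_zero.1 h0 with h | h
    · exact hx0 h
    · exact X_ne_zero _ h
  refine ⟨n + m, x ^ m * a, x ^ m * b, -c, ?_, ?_, ?_⟩
  · apply mul_left_cancel₀ hf₁0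
    linear_combination x ^ m * hK + f₂ * hc
  · linear_combination - hc
  · linear_combination - x ^ m * hab

/-! ### The complex -/

/-- The coordinate `s` on `Λ²H`. -/
def pp (s : Fin 6) : R8 := X (Sum.inl s)

/-- The coordinate `i` on `H`. -/
def aa (i : Fin 4) : R8 := X (Sum.inr i)

/-- The skew matrix of `p`, applied to a vector. -/
def PV (v : Fin 4 → R8) (i : Fin 4) : R8 :=
  ![pp 0 * v 1 + pp 1 * v 2 + pp 2 * v 3,
    -pp 0 * v 0 + pp 3 * v 2 + pp 4 * v 3,
    -pp 1 * v 0 - pp 3 * v 1 + pp 5 * v 3,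
    -pp 2 * v 0 - pp 4 * v 1 - pp 5 * v 2] i

/-- The components of `p ∧ a`, as a covector, for an arbitrary `a`. -/
def WV (a : Fin 4 → R8) (i : Fin 4) : R8 :=
  ![pp 3 * a 3 - pp 4 * a 2 + pp 5 * a 1,
    -(pp 1 * a 3 - pp 2 * a 2 + pp 5 * a 0),
    pp 0 * a 3 - pp 2 * a 1 + pp 4 * a 0,
    -(pp 0 * a 2 - pp 1 * a 1 + pp 3 * a 0)] i

/-- Plain pairing. -/
def dot8 (a v : Fin 4 → R8) : R8 := a 0 * v 0 + a 1 * v 1 + a 2 * v 2 + a 3 * v 3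

/-- First differential. -/
def dd1 (a : Fin 4 → R8) : (R8 × (Fin 4 → R8)) →ₗ[R8] R8 where
  toFun v := v.1 * pl8 + dot8 (WV a) v.2
  map_add' u v := by simp [dot8]; ring
  map_smul' c v := by simp [dot8]; ring

/-- Second differential. -/
def dd2 (a : Fin 4 → R8) : ((Fin 4 → R8) × R8) →ₗ[R8] (R8 × (Fin 4 → R8)) where
  toFun v := (-dot8 a v.1, PV v.1 + v.2 • a)
  map_add' u v := by
    refine Prod.ext ?_ (funext fun i => ?_)
    · simp [dot8]; ring
    · fin_cases i <;> simp [PV] <;> ring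
  map_smul' c v := by
    refine Prod.ext ?_ (funext fun i => ?_)
    · simp [dot8]; ring
    · fin_cases i <;> simp [PV] <;> ring

/-- Third differential. -/
def dd3 (a : Fin 4 → R8) : R8 →ₗ[R8] ((Fin 4 → R8) × R8) where
  toFun r := (r • WV a, r * pl8)
  map_add' u v := by simp [add_smul, add_mul]
  map_smul' c v := by simp [mul_smul, mul_assoc]

theorem dd1_apply (a) (v) : dd1 a v = v.1 * pl8 + dot8 (WV a) v.2 := rfl

theorem dd2_apply (a) (v) : dd2 a v = (-dot8 a v.1, PV v.1 + v.2 • a) := rfl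

theorem dd3_apply (a) (r) : dd3 a r = (r • WV a, r * pl8) := rfl

theorem pl8_eq : pl8 = pp 0 * pp 5 - pp 1 * pp 4 + pp 2 * pp 3 := rfl

theorem dd1_dd2 (a) (v) : dd1 a (dd2 a v) = 0 := by
  simp [dd1_apply, dd2_apply, dot8, WV, PV, pl8_eq]
  ring

theorem dd2_dd3 (a) (r) : dd2 a (dd3 a r) = 0 := by
  refine Prod.ext ?_ (funext fun i => ?_)
  · simp [dd3_apply, dd2_apply, dot8, WV]
    ring
  · fin_cases i <;> simp [dd3_apply, dd2_apply, PV, WV, pl8_eq] <;> ring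

theorem pp_inj_dvd {k l : Fin 6} (h : k ≠ l) : ¬ pp k ∣ pp l := by
  rintro ⟨g, hg⟩
  have := congrArg (eval (fun i => if i = Sum.inl l then (1 : ℂ) else 0)) hg
  simp [pp, h] at this

theorem pl8_ne_zero : pl8 ≠ 0 := by
  intro h
  have := congrArg (eval (fun _ => (1 : ℂ))) h
  simp [pl8] at this

theorem pl8_prime : Prime pl8 := by
  rw [← irreducible_iff_prime]
  have hv : ∀ k : Fin 6, k ≠ 0 → Sum.inl 0 ∉ (pp k).vars := by
    intro k hk
    simp [pp, vars_X, hk.symm]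
  have h := irreducible_mul_X_add (pp 5) (-(pp 1 * pp 4) + pp 2 * pp 3) (Sum.inl 0)
    (X_ne_zero _) (hv 5 (by decide)) (by
      intro h
      have h1 := vars_add_subset _ _ h
      rw [Finset.mem_union, vars_neg] at h1
      rcases h1 with h1 | h1 <;>
      · have h2 := vars_mul _ _ h1
        rw [Finset.mem_union] at h2
        rcases h2 with h2 | h2
        · exact hv _ (by decide) h2
        · exact hv _ (by decide) h2) (by
      have hirr : Irreducible (pp 5) := X_prime.irreducible
      refine (hirr.isRelPrime_iff_not_dvd).2 ?_
      rintro ⟨g, hg⟩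
      have := congrArg (eval (fun i => if i = Sum.inl 2 ∨ i = Sum.inl 3 then (1 : ℂ) else 0)) hg
      simp [pp] at this)
  have e : pl8 = pp 5 * X (Sum.inl 0) + (-(pp 1 * pp 4) + pp 2 * pp 3) := by
    rw [pl8_eq, pp]
    ring
  rwa [e]

/-- Exactness at the second spot. -/
theorem exact2 (a : Fin 4 → R8) (h3 : a 3 = aa 3) (v) (hv : dd2 a v = 0) :
    ∃ c, v = dd3 a c := by
  obtain ⟨v, s⟩ := v
  have hP := (Prod.ext_iff.1 hv).2
  have e0 := congrFun hP 0
  have e1 := congrFun hP 1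
  have e2 := congrFun hP 2
  have e3 := congrFun hP 3
  simp [dd2_apply, PV] at e0 e1 e2 e3
  have key : ∀ i, pl8 * v i = s * WV a i := by
    intro i
    fin_cases i <;> simp [WV, pl8_eq]
    · linear_combination - pp 5 * e1 + pp 4 * e2 - pp 3 * e3
    · linear_combination pp 5 * e0 - pp 2 * e2 + pp 1 * e3
    · linear_combination - pp 4 * e0 + pp 2 * e1 - pp 0 * e3
    · linear_combination pp 3 * e0 - pp 1 * e1 + pp 0 * e2
  have hnd : ¬ pl8 ∣ WV a 0 := by
    rintro ⟨g, hg⟩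
    have := congrArg (eval (fun i => if i = Sum.inl 3 ∨ i = Sum.inr 3 then (1 : ℂ) else 0)) hg
    simp [pl8, WV, h3, aa, pp] at this
  obtain ⟨c, hc⟩ : pl8 ∣ s := (pl8_prime.dvd_or_dvd ⟨v 0, (key 0).symm⟩).resolve_right hnd
  refine ⟨c, Prod.ext (funext fun i => mul_left_cancel₀ pl8_ne_zero ?_) ?_⟩
  · rw [key i, hc]
    simp [dd3_apply]
    ring
  · simp [dd3_apply, hc, mul_comm]

/-- Reduction modulo a variable of `H`. -/
theorem kill8_pp (k : Fin 4) (s : Fin 6) : kill8 (Sum.inr k) (pp s) = pp s := by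
  rw [pp, kill8_X, if_neg (by simp)]

theorem kill8_PV (k : Fin 4) (v : Fin 4 → R8) (i) :
    kill8 (Sum.inr k) (PV v i) = PV (fun j => kill8 (Sum.inr k) (v j)) i := by
  fin_cases i <;> simp [PV, kill8_pp]

theorem kill8_WV (k : Fin 4) (v : Fin 4 → R8) (i) :
    kill8 (Sum.inr k) (WV v i) = WV (fun j => kill8 (Sum.inr k) (v j)) i := by
  fin_cases i <;> simp [WV, kill8_pp]

theorem kill8_dot8 (k : Fin 4) (a v : Fin 4 → R8) :
    kill8 (Sum.inr k) (dot8 a v) =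
      dot8 (fun j => kill8 (Sum.inr k) (a j)) (fun j => kill8 (Sum.inr k) (v j)) := by
  simp [dot8]

theorem kill8_pl8 (k : Fin 4) : kill8 (Sum.inr k) pl8 = pl8 := by
  simp [pl8_eq, kill8_pp]

theorem aa_ne_zero (k : Fin 4) : aa k ≠ 0 := X_ne_zero _

theorem kill8_vec (k : Fin 4) (v : Fin 4 → R8) :
    ∃ v' : Fin 4 → R8, v = (fun j => kill8 (Sum.inr k) (v j)) + aa k • v' := by
  choose g hg using fun j => kill8_dvd (Sum.inr k) (v j)
  exact ⟨g, funext fun j => hg j⟩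

/-- Removing a factor `a_k`. -/
theorem descent (k : Fin 4) (a a' : Fin 4 → R8) (ha : ∀ j, kill8 (Sum.inr k) (a j) = a' j)
    (h3 : a' 3 = aa 3) (u : R8 × (Fin 4 → R8)) (h : aa k • u ∈ LinearMap.range (dd2 a)) :
    u ∈ LinearMap.range (dd2 a) := by
  obtain ⟨⟨v, s⟩, hv⟩ := h
  have hk : kill8 (Sum.inr k) (aa k) = 0 := by rw [aa, kill8_X, if_pos rfl]
  have hz : dd2 a' (fun j => kill8 (Sum.inr k) (v j), kill8 (Sum.inr k) s) = 0 := by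
    refine Prod.ext ?_ (funext fun i => ?_)
    · have := congrArg (kill8 (Sum.inr k)) (Prod.ext_iff.1 hv).1
      simp only [dd2_apply, map_neg, kill8_dot8, Prod.smul_fst, smul_eq_mul, map_mul, hk,
        zero_mul, ha] at this
      exact this
    · have := congrArg (kill8 (Sum.inr k)) (congrFun (Prod.ext_iff.1 hv).2 i)
      simp only [dd2_apply, Prod.smul_snd, smul_eq_mul, map_mul, hk, Pi.add_apply, map_add,
        Pi.smul_apply, kill8_PV, zero_mul, ha] at this
      exact this
  obtain ⟨c, hc⟩ := exact2 a' h3 _ hz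
  obtain ⟨v', hv'⟩ := kill8_vec k v
  obtain ⟨s', hs'⟩ := kill8_dvd (Sum.inr k) s
  obtain ⟨w', hw'⟩ := kill8_vec k (WV a)
  have hw2 : (fun j => kill8 (Sum.inr k) (WV a j)) = WV a' := by
    funext j
    rw [kill8_WV]
    simp only [ha]
  rw [hw2] at hw'
  have hc1 := (Prod.ext_iff.1 hc).1
  have hc2 := (Prod.ext_iff.1 hc).2
  simp only [dd3_apply] at hc1 hc2
  have hdec : ((v, s) : (Fin 4 → R8) × R8) = dd3 a c + aa k • (v' - c • w', s') := by
    refine Prod.ext ?_ ?_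
    · simp only [dd3_apply, Prod.fst_add, Prod.smul_fst]
      rw [hv', hc1]
      conv_rhs => rw [hw']
      funext j
      simp
      ring
    · simp only [dd3_apply, Prod.snd_add, Prod.smul_snd]
      rw [hs', hc2]
      rfl
  refine ⟨(v' - c • w', s'), ?_⟩
  rw [hdec, map_add, dd2_dd3, zero_add, map_smul] at hv
  exact smul_right_injective _ (aa_ne_zero k) hv

theorem descent_pow (k : Fin 4) (a a' : Fin 4 → R8) (ha : ∀ j, kill8 (Sum.inr k) (a j) = a' j)
    (h3 : a' 3 = aa 3) (n : ℕ) (u : R8 × (Fin 4 → R8))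
    (h : aa k ^ n • u ∈ LinearMap.range (dd2 a)) :
    u ∈ LinearMap.range (dd2 a) := by
  induction n with
  | zero => simpa using h
  | succ n ih =>
    apply ih
    apply descent k a a' ha h3
    rwa [← mul_smul, ← pow_succ']

/-- `a` with its first coordinate set to zero. -/
def aA1 (i : Fin 4) : R8 := ![0, aa 1, aa 2, aa 3] i

/-- `a` with its first two coordinates set to zero. -/
def aA2 (i : Fin 4) : R8 := ![0, 0, aa 2, aa 3] i

theorem kill_aa (k j : Fin 4) : kill8 (Sum.inr k) (aa j) = if j = k then 0 else aa j := by
  rw [aa, kill8_X]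
  simp

theorem killS8_pp (Y : Finset (Fin 6 ⊕ Fin 4)) (s : Fin 6) (h : Sum.inl s ∉ Y) :
    killS8 Y (pp s) = pp s := by
  rw [pp, killS8_X, if_neg h]

theorem killS8_aa (Y : Finset (Fin 6 ⊕ Fin 4)) (s : Fin 4) (h : Sum.inr s ∉ Y) :
    killS8 Y (aa s) = aa s := by
  rw [aa, killS8_X, if_neg h]

/-- Exactness at the first spot when `a₀ = 0`. -/
theorem exact1_aA1 (u) (hu : dd1 aA1 u = 0) : u ∈ LinearMap.range (dd2 aA1) := by
  obtain ⟨r, u⟩ := u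
  -- clear the Plücker component and the component `u 1`
  set u' : Fin 4 → R8 := aa 1 • u + r • PV ![0, 1, 0, 0] with hu'
  set u'' : Fin 4 → R8 := aa 1 • u' - u' 1 • aA1 with hu''
  have h1 : ((0, u'') : R8 × (Fin 4 → R8)) =
      aa 1 ^ 2 • (r, u) + dd2 aA1 (aa 1 • (r • ![0, 1, 0, 0]), - u' 1) := by
    refine Prod.ext ?_ (funext fun i => ?_)
    · simp [dd2_apply, dot8, aA1]; ring
    · rw [hu'']
      simp only [dd2_apply, Prod.snd_add, Prod.smul_snd, Pi.add_apply, Pi.sub_apply,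
        Pi.smul_apply, smul_eq_mul]
      rw [hu']
      fin_cases i <;> simp [PV, aA1] <;> ring
  have h2 : dd1 aA1 (0, u'') = 0 := by
    rw [h1, map_add, map_smul, hu, dd1_dd2]; simp
  have h3 : u'' 1 = 0 := by
    rw [hu'']; simp [aA1]; ring
  have h4 : WV aA1 3 * u'' 3 + (-WV aA1 2) * (-u'' 2) + WV aA1 0 * u'' 0 = 0 := by
    simp only [dd1_apply, dot8, h3] at h2
    linear_combination h2
  obtain ⟨n, α, β, γ, k1, k2, k3⟩ := koszul8 (Sum.inl 1) (Sum.inl 2) (by decide)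
    (pp 0 * aa 2) (pp 0 * aa 3) (aa 1) (WV aA1 0)
    (killS8_aa _ _ (by decide)) (aa_ne_zero 1)
    (by rw [map_mul, killS8_aa _ _ (by decide), killS8_pp _ _ (by decide)])
    (by rw [map_mul, killS8_aa _ _ (by decide), killS8_pp _ _ (by decide)])
    (by simp [WV, aA1, killS8_aa, killS8_pp])
    (by
      intro h
      have := congrArg (eval (fun i => if i = Sum.inl 3 ∨ i = Sum.inr 3 then (1 : ℂ) else 0)) h
      simp [WV, aA1, aa, pp] at this)
    (killS8_aa _ _ (by decide))
    (by rw [map_mul, killS8_aa _ _ (by decide), killS8_pp _ _ (by decide)])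
    (by rw [map_mul, killS8_aa _ _ (by decide), killS8_pp _ _ (by decide)])
    (WV aA1 3) (-WV aA1 2) (u'' 3) (-u'' 2) (u'' 0)
    (by simp [WV, aA1, pp]; ring)
    (by simp [WV, aA1, pp]; ring)
    (by
      intro h
      have := congrArg (eval (fun i => if i = Sum.inl 0 ∨ i = Sum.inr 3 then (1 : ℂ) else 0)) h
      simp [WV, aA1, aa, pp] at this)
    h4
  have h5 : aa 1 ^ n • ((0, u'') : R8 × (Fin 4 → R8)) ∈ LinearMap.range (dd2 aA1) := by
    refine ⟨(![-γ * aa 1, -α * aa 2 - β * aa 3, α * aa 1, β * aa 1],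
      -α * pp 3 - β * pp 4 - γ * pp 0), ?_⟩
    refine Prod.ext ?_ (funext fun i => ?_)
    · simp [dd2_apply, dot8, aA1]
      ring
    · fin_cases i
      · simp [dd2_apply, PV, aA1]
        simp [WV, aA1] at k1 k2 k3
        linear_combination - k3
      · simp [dd2_apply, PV, aA1, h3]
        ring
      · simp [dd2_apply, PV, aA1]
        simp [WV, aA1] at k1 k2 k3
        linear_combination k2
      · simp [dd2_apply, PV, aA1]
        simp [WV, aA1] at k1 k2 k3
        linear_combination -k1
  have h6 : aa 1 ^ (n + 2) • ((r, u) : R8 × (Fin 4 → R8)) ∈ LinearMap.range (dd2 aA1) := by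
    rw [h1, smul_add, ← mul_smul, ← pow_add] at h5
    exact (Submodule.add_mem_iff_left _
      (Submodule.smul_mem _ _ (LinearMap.mem_range_self _ _))).1 h5
  exact descent_pow 1 aA1 aA2 (by
    intro j
    fin_cases j <;> simp [aA1, aA2, kill_aa]) (by simp [aA2]) _ _ h6

/-- Exactness at the first spot. -/
theorem exact1_aa (u) (hu : dd1 aa u = 0) : u ∈ LinearMap.range (dd2 aa) := by
  obtain ⟨r, u⟩ := u
  set u' : Fin 4 → R8 := aa 0 • u + r • PV ![1, 0, 0, 0] with hu'
  set u'' : Fin 4 → R8 := aa 0 • u' - u' 0 • aa with hu''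
  have h1 : ((0, u'') : R8 × (Fin 4 → R8)) =
      aa 0 ^ 2 • (r, u) + dd2 aa (aa 0 • (r • ![1, 0, 0, 0]), - u' 0) := by
    refine Prod.ext ?_ (funext fun i => ?_)
    · simp [dd2_apply, dot8]; ring
    · rw [hu'']
      simp only [dd2_apply, Prod.snd_add, Prod.smul_snd, Pi.add_apply, Pi.sub_apply,
        Pi.smul_apply, smul_eq_mul]
      rw [hu']
      fin_cases i <;> simp [PV] <;> ring
  have h2 : dd1 aa (0, u'') = 0 := by
    rw [h1, map_add, map_smul, hu, dd1_dd2]; simp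
  have h3 : u'' 0 = 0 := by
    rw [hu'']; simp; ring
  have h4 : (-WV aa 3) * (-u'' 3) + WV aa 2 * u'' 2 + WV aa 1 * u'' 1 = 0 := by
    simp only [dd1_apply, dot8, h3] at h2
    linear_combination h2
  obtain ⟨n, α, β, γ, k1, k2, k3⟩ := koszul8 (Sum.inl 3) (Sum.inl 4) (by decide)
    (pp 1 * aa 1 - pp 0 * aa 2) (pp 2 * aa 1 - pp 0 * aa 3) (aa 0) (WV aa 1)
    (killS8_aa _ _ (by decide)) (aa_ne_zero 0)
    (by simp [killS8_aa, killS8_pp])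
    (by simp [killS8_aa, killS8_pp])
    (by simp [WV, killS8_aa, killS8_pp])
    (by
      intro h
      have := congrArg (eval (fun i => if i = Sum.inl 1 ∨ i = Sum.inr 3 then (1 : ℂ) else 0)) h
      simp [WV, aa, pp] at this)
    (killS8_aa _ _ (by decide))
    (by simp [killS8_aa, killS8_pp])
    (by simp [killS8_aa, killS8_pp])
    (-WV aa 3) (WV aa 2) (-u'' 3) (u'' 2) (u'' 1)
    (by simp [WV, pp]; ring)
    (by simp [WV, pp]; ring)
    (by
      intro h
      have := congrArg (eval (fun i => if i = Sum.inl 0 ∨ i = Sum.inr 3 then (1 : ℂ) else 0)) h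
      simp [WV, aa, pp] at this)
    h4
  have h5 : aa 0 ^ n • ((0, u'') : R8 × (Fin 4 → R8)) ∈ LinearMap.range (dd2 aa) := by
    refine ⟨(![-γ * aa 1 - α * aa 2 - β * aa 3, γ * aa 0, α * aa 0, β * aa 0],
      -γ * pp 0 - α * pp 1 - β * pp 2), ?_⟩
    refine Prod.ext ?_ (funext fun i => ?_)
    · simp [dd2_apply, dot8]
      ring
    · fin_cases i
      · simp [dd2_apply, PV, h3]
        ring
      · simp [dd2_apply, PV]
        simp [WV] at k1 k2 k3
        linear_combination - k3
      · simp [dd2_apply, PV]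
        simp [WV] at k1 k2 k3
        linear_combination - k2
      · simp [dd2_apply, PV]
        simp [WV] at k1 k2 k3
        linear_combination k1
  have h6 : aa 0 ^ (n + 2) • ((r, u) : R8 × (Fin 4 → R8)) ∈ LinearMap.range (dd2 aa) := by
    rw [h1, smul_add, ← mul_smul, ← pow_add] at h5
    exact (Submodule.add_mem_iff_left _
      (Submodule.smul_mem _ _ (LinearMap.mem_range_self _ _))).1 h5
  exact descent_pow 0 aa aA1 (by
    intro j
    fin_cases j <;> simp [aA1, kill_aa]) (by simp [aA1]) _ _ h6

/-! ### The ideal -/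

/-- `a₀` is a nonzerodivisor modulo the ideal. -/
theorem nzd (f : R8) (h : aa 0 * f ∈ LinearMap.range (dd1 aa)) :
    f ∈ LinearMap.range (dd1 aa) := by
  obtain ⟨⟨r, u⟩, hu⟩ := h
  have ha : ∀ j, kill8 (Sum.inr 0) (aa j) = aA1 j := by
    intro j
    fin_cases j <;> simp [aA1, kill_aa]
  have hk := congrArg (kill8 (Sum.inr 0)) hu
  have hz : dd1 aA1 (kill8 (Sum.inr 0) r, fun j => kill8 (Sum.inr 0) (u j)) = 0 := by
    simp only [dd1_apply, map_add, map_mul, kill8_dot8, kill8_WV, ha, kill8_pl8, aA1,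
      Matrix.cons_val_zero, zero_mul] at hk
    exact hk
  obtain ⟨⟨v, s⟩, hv⟩ := exact1_aA1 _ hz
  obtain ⟨r', hr'⟩ := kill8_dvd (Sum.inr 0) r
  obtain ⟨u', hu'⟩ := kill8_vec 0 u
  have e1 : kill8 (Sum.inr 0) r = -dot8 aA1 v := (Prod.ext_iff.1 hv).1.symm
  have e2 : (fun j => kill8 (Sum.inr 0) (u j)) = PV v + s • aA1 := (Prod.ext_iff.1 hv).2.symm
  have hdec : ((r, u) : R8 × (Fin 4 → R8)) =
      dd2 aa (v, s) + aa 0 • (r' + v 0, u' - s • Pi.single 0 1) := by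
    refine Prod.ext ?_ (funext fun i => ?_)
    · change r = _
      rw [hr', e1]
      simp [dd2_apply, dot8, aA1, aa]
      ring
    · change u i = _
      rw [hu', e2]
      fin_cases i <;> simp [dd2_apply, aA1] <;> try ring
  refine ⟨(r' + v 0, u' - s • Pi.single 0 1), ?_⟩
  rw [hdec, map_add, dd1_dd2, zero_add, map_smul, smul_eq_mul] at hu
  exact mul_left_cancel₀ (aa_ne_zero 0) hu

theorem nzd_pow (n : ℕ) (f : R8) (h : aa 0 ^ n * f ∈ LinearMap.range (dd1 aa)) :
    f ∈ LinearMap.range (dd1 aa) := by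
  induction n with
  | zero => simpa using h
  | succ n ih =>
    apply ih
    apply nzd
    rwa [← mul_assoc, ← pow_succ']

theorem mem_range_WV (i : Fin 4) : WV aa i ∈ LinearMap.range (dd1 aa) := by
  refine ⟨(0, Pi.single i 1), ?_⟩
  fin_cases i <;> simp [dd1_apply, dot8]

theorem WV_wedge : WV aa = ![wedge8 3, - wedge8 2, wedge8 1, - wedge8 0] := by
  funext i
  fin_cases i <;> rfl

theorem range_dd1 : LinearMap.range (dd1 aa) = J8 := by
  apply le_antisymm
  · rintro _ ⟨v, rfl⟩ x hx
    simp [dd1_apply, dot8, WV_wedge, hx.1, hx.2]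
  · intro f hf
    have hf' : ∀ x ∈ C8, eval x f = 0 := hf
    have hq : ∀ y : Fin 6 ⊕ Fin 4, killS8 {Sum.inl 3, Sum.inl 4, Sum.inl 5}
        (if y = Sum.inl 3 then pp 1 * aa 1 - pp 0 * aa 2 else
          if y = Sum.inl 4 then pp 2 * aa 1 - pp 0 * aa 3 else pp 2 * aa 2 - pp 1 * aa 3) =
        (if y = Sum.inl 3 then pp 1 * aa 1 - pp 0 * aa 2 else
          if y = Sum.inl 4 then pp 2 * aa 1 - pp 0 * aa 3 else pp 2 * aa 2 - pp 1 * aa 3) := by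
      intro y
      split_ifs <;> simp [killS8_aa, killS8_pp]
    obtain ⟨n, hn⟩ := elim8_mem {Sum.inl 3, Sum.inl 4, Sum.inl 5} _ (aa 0) 1
      (fun y _ => hq y) (killS8_aa _ _ (by decide)) (aa_ne_zero 0) (map_one _) one_ne_zero f (by
        intro pt hpt hy
        rw [one_mul]
        apply hf'
        have h1 := hy (Sum.inl 3) (by decide)
        have h2 := hy (Sum.inl 4) (by decide)
        have h3 := hy (Sum.inl 5) (by decide)
        simp [aa, pp] at h1 h2 h3 hpt
        constructor
        · have : pt (Sum.inr 0) * (pt (Sum.inl 0) * pt (Sum.inl 5) -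
              pt (Sum.inl 1) * pt (Sum.inl 4) + pt (Sum.inl 2) * pt (Sum.inl 3)) = 0 := by
            linear_combination pt (Sum.inl 0) * h3 - pt (Sum.inl 1) * h2 + pt (Sum.inl 2) * h1
          simpa [pl8, hpt] using this
        · intro i
          fin_cases i
          · simp [wedge8]
            linear_combination h1
          · simp [wedge8]
            linear_combination h2
          · simp [wedge8]
            linear_combination h3
          · have : pt (Sum.inr 0) * (pt (Sum.inl 3) * pt (Sum.inr 3) -
                pt (Sum.inl 4) * pt (Sum.inr 2) + pt (Sum.inl 5) * pt (Sum.inr 1)) = 0 := by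
              linear_combination pt (Sum.inr 3) * h1 - pt (Sum.inr 2) * h2 + pt (Sum.inr 1) * h3
            simpa [wedge8, hpt] using this)
    apply nzd_pow n
    refine (Ideal.span_le (I := LinearMap.range (dd1 aa))).2 ?_ hn
    rintro _ ⟨y, hy, rfl⟩
    simp only [Finset.coe_insert, Finset.coe_singleton, Set.mem_insert_iff,
      Set.mem_singleton_iff] at hy
    rcases hy with rfl | rfl | rfl
    · convert Submodule.neg_mem _ (mem_range_WV 3) using 1
      simp [WV, pp]
      ring
    · convert mem_range_WV 2 using 1
      simp [WV, pp]
      ring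
    · convert Submodule.neg_mem _ (mem_range_WV 1) using 1
      simp [WV, pp]
      ring

/-! ### Equivariance -/

theorem subst8_aa (m : Matrix (Fin 4) (Fin 4) ℂ) (i : Fin 4) :
    subst8 m (aa i) = ∑ j : Fin 4, C (m i j) * aa j := by
  simp [subst8, aa]

theorem subst8_pp (m : Matrix (Fin 4) (Fin 4) ℂ) (s : Fin 6) :
    subst8 m (pp s) = ∑ t : Fin 6,
      (C (m (idxPair s).1 (idxPair t).1) * C (m (idxPair s).2 (idxPair t).2) -
         C (m (idxPair s).1 (idxPair t).2) * C (m (idxPair s).2 (idxPair t).1)) * pp t := by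
  simp [subst8, pp]

theorem det4 (m : Matrix (Fin 4) (Fin 4) ℂ) : m.det =
    m 0 0 * (m 1 1 * (m 2 2 * m 3 3 - m 2 3 * m 3 2) - m 1 2 * (m 2 1 * m 3 3 - m 2 3 * m 3 1)
      + m 1 3 * (m 2 1 * m 3 2 - m 2 2 * m 3 1))
    - m 0 1 * (m 1 0 * (m 2 2 * m 3 3 - m 2 3 * m 3 2) - m 1 2 * (m 2 0 * m 3 3 - m 2 3 * m 3 0)
      + m 1 3 * (m 2 0 * m 3 2 - m 2 2 * m 3 0))
    + m 0 2 * (m 1 0 * (m 2 1 * m 3 3 - m 2 3 * m 3 1) - m 1 1 * (m 2 0 * m 3 3 - m 2 3 * m 3 0)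
      + m 1 3 * (m 2 0 * m 3 1 - m 2 1 * m 3 0))
    - m 0 3 * (m 1 0 * (m 2 1 * m 3 2 - m 2 2 * m 3 1) - m 1 1 * (m 2 0 * m 3 2 - m 2 2 * m 3 0)
      + m 1 2 * (m 2 0 * m 3 1 - m 2 1 * m 3 0)) := by
  rw [Matrix.det_succ_row_zero]
  simp [Fin.sum_univ_succ, Matrix.det_fin_three, Fin.succAbove]
  ring

theorem subst8_pl8 (m : Matrix (Fin 4) (Fin 4) ℂ) : subst8 m pl8 = C m.det * pl8 := by
  rw [pl8_eq]
  simp only [map_add, map_sub, map_mul, subst8_pp, det4]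
  simp [Fin.sum_univ_succ, idxPair]
  ring

theorem subst8_WV (m : Matrix (Fin 4) (Fin 4) ℂ) (i : Fin 4) :
    ∑ j : Fin 4, C (m j i) * subst8 m (WV aa j) = C m.det * WV aa i := by
  fin_cases i
  all_goals
    simp only [WV, Fin.sum_univ_four, det4]
    simp [subst8_pp, subst8_aa, Fin.sum_univ_succ, idxPair]
    ring

theorem sum_inv8 (A B : Matrix (Fin 4) (Fin 4) ℂ) (h : A * B = 1) (Z : Fin 4 → R8) (i : Fin 4) :
    ∑ j : Fin 4, C (A i j) * ∑ k : Fin 4, C (B j k) * Z k = Z i := by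
  have h1 : ∀ k, ∑ j : Fin 4, C (A i j) * C (B j k) = (if i = k then (1 : R8) else 0) := by
    intro k
    have := congrArg (C (σ := Fin 6 ⊕ Fin 4)) (congrFun (congrFun h i) k)
    rw [Matrix.mul_apply, map_sum, Matrix.one_apply] at this
    simp only [map_mul] at this
    rw [this]
    split_ifs <;> simp
  calc ∑ j : Fin 4, C (A i j) * ∑ k : Fin 4, C (B j k) * Z k
      = ∑ k : Fin 4, (∑ j : Fin 4, C (A i j) * C (B j k)) * Z k := by
        simp only [Finset.mul_sum, Finset.sum_mul]
        rw [Finset.sum_comm]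
        simp only [mul_assoc]
    _ = Z i := by simp [h1]

theorem subst8_WV' (G m : Matrix (Fin 4) (Fin 4) ℂ) (h : m * G = 1) (j : Fin 4) :
    subst8 m (WV aa j) = C m.det * ∑ i : Fin 4, C (G i j) * WV aa i := by
  have h' : G.transpose * m.transpose = 1 := by
    rw [← Matrix.transpose_mul, h, Matrix.transpose_one]
  rw [← sum_inv8 _ _ h' (fun k => subst8 m (WV aa k)) j, Finset.mul_sum]
  refine Finset.sum_congr rfl fun i _ => ?_
  simp only [Matrix.transpose_apply]
  rw [subst8_WV]
  ring

theorem subst8_PV (m : Matrix (Fin 4) (Fin 4) ℂ) (v : Fin 4 → R8) (j : Fin 4) :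
    subst8 m (PV v j) =
      ∑ k : Fin 4, C (m j k) * PV (fun i => ∑ l : Fin 4, C (m l i) * subst8 m (v l)) k := by
  fin_cases j
  all_goals
    simp only [PV, Fin.sum_univ_four]
    simp [subst8_pp, Fin.sum_univ_succ, idxPair]
    ring

theorem equi1 (g : Matrix.GeneralLinearGroup (Fin 4) ℂ) (v) :
    dd1 aa (act1 g v) = act0 g (dd1 aa v) := by
  have h : (↑g⁻¹ : Matrix (Fin 4) (Fin 4) ℂ) * (↑g : Matrix (Fin 4) (Fin 4) ℂ) = 1 := by
    rw [← Units.val_mul]; simp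
  simp only [dd1_apply, dot8, act1, act0, map_add, map_mul, subst8_pl8, subst8_WV' _ _ h,
    Fin.sum_univ_four]
  ring

theorem equi2 (g : Matrix.GeneralLinearGroup (Fin 4) ℂ) (v) :
    dd2 aa (act2 g v) = act1 g (dd2 aa v) := by
  have h : (↑g : Matrix (Fin 4) (Fin 4) ℂ) * (↑g⁻¹ : Matrix (Fin 4) (Fin 4) ℂ) = 1 := by
    rw [← Units.val_mul]; simp
  refine Prod.ext ?_ (funext fun i => ?_)
  · simp only [dd2_apply, dot8, act1, act2, act0, map_add, map_mul, map_neg, subst8_aa,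
      Fin.sum_univ_four]
    ring
  · obtain ⟨v, s⟩ := v
    simp only [dd2_apply, act1, act2, act0, map_add, map_mul, subst8_PV, subst8_aa,
      Pi.add_apply, Pi.smul_apply, smul_eq_mul]
    generalize (↑g⁻¹ : Matrix (Fin 4) (Fin 4) ℂ) = m at *
    generalize (↑g : Matrix (Fin 4) (Fin 4) ℂ) = G at *
    have key := sum_inv8 G m h (fun k => PV (fun i => ∑ l : Fin 4, C (m l i) * subst8 m (v l)) k
      + subst8 m s * aa k) i
    have e : ∀ j, ∑ k : Fin 4, C (m j k) * PV (fun i => ∑ l : Fin 4, C (m l i) * subst8 m (v l)) k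
        + subst8 m s * ∑ k : Fin 4, C (m j k) * aa k =
        ∑ k : Fin 4, C (m j k) * (PV (fun i => ∑ l : Fin 4, C (m l i) * subst8 m (v l)) k
      + subst8 m s * aa k) := by
      intro j
      rw [Finset.mul_sum, ← Finset.sum_add_distrib]
      exact Finset.sum_congr rfl fun k _ => by ring
    simp only [e, key]
    fin_cases i <;> simp [PV] <;> ring

theorem equi3 (g : Matrix.GeneralLinearGroup (Fin 4) ℂ) (r) :
    dd3 aa (act3 g r) = act2 g (dd3 aa r) := by
  refine Prod.ext (funext fun i => ?_) ?_
  · have key := subst8_WV (↑g⁻¹ : Matrix (Fin 4) (Fin 4) ℂ) i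
    simp only [dd3_apply, act2, act3, act0, Pi.smul_apply, smul_eq_mul, map_mul, map_pow,
      Fin.sum_univ_four] at key ⊢
    linear_combination (-C (↑g⁻¹ : Matrix (Fin 4) (Fin 4) ℂ).det *
      subst8 (↑g⁻¹ : Matrix (Fin 4) (Fin 4) ℂ) r) * key
  · simp only [dd3_apply, act2, act3, act0, map_mul, map_pow, subst8_pl8]
    ring

/-- the coordinate ring `ℂ[C] = R8 ⧸ J8` admits a finite free resolution
of length 3 of the form
`0 → (det H)⁻² → H^∨(det H)⁻¹ ⊕ (det H)⁻¹ → (det H)⁻¹ ⊕ Λ³H^∨ → O → ℂ[C] → 0`,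
equivariant for `GL(H)`. -/
theorem stmt8 :
    ∃ (d₁ : (R8 × (Fin 4 → R8)) →ₗ[R8] R8)
      (d₂ : ((Fin 4 → R8) × R8) →ₗ[R8] (R8 × (Fin 4 → R8)))
      (d₃ : R8 →ₗ[R8] ((Fin 4 → R8) × R8)),
      Function.Injective d₃ ∧
      Function.Exact d₃ d₂ ∧
      Function.Exact d₂ d₁ ∧
      LinearMap.range d₁ = J8 ∧
      (∀ g : Matrix.GeneralLinearGroup (Fin 4) ℂ, ∀ v, d₁ (act1 g v) = act0 g (d₁ v)) ∧
      (∀ g : Matrix.GeneralLinearGroup (Fin 4) ℂ, ∀ v, d₂ (act2 g v) = act1 g (d₂ v)) ∧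
      (∀ g : Matrix.GeneralLinearGroup (Fin 4) ℂ, ∀ r, d₃ (act3 g r) = act2 g (d₃ r)) := by
  refine ⟨dd1 aa, dd2 aa, dd3 aa, ?_, ?_, ?_, range_dd1, equi1, equi2, equi3⟩
  · intro r s h
    exact mul_right_cancel₀ pl8_ne_zero (Prod.ext_iff.1 h).2
  · intro v
    constructor
    · intro hv
      obtain ⟨c, hc⟩ := exact2 aa rfl v hv
      exact ⟨c, hc.symm⟩
    · rintro ⟨c, rfl⟩
      exact dd2_dd3 aa c
  · intro u
    constructor
    · intro hu
      exact exact1_aa u hu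
    · rintro ⟨v, rfl⟩
      exact dd1_dd2 aa v


end
end

section
/- Let H be a 4-dimensional complex vector space and C = {(p,a) ∈ Λ²H × H : p ∧ p = 0, p ∧ a = 0}. Then C is an irreducible variety of codimension 3 in the 10-dimensional affine space Λ²H × H; in particular C is not a complete intersection (it is cut out by 5 equations but has codimension 3). -/
noncomputable section

open MvPolynomial

/-- Polynomial ring on `Λ²H × H ≅ ℂ⁶ × ℂ⁴` for `H = ℂ⁴`; the `Fin 6` variables are
the coordinates `p₀₁, p₀₂, p₀₃, p₁₂, p₁₃, p₂₃` of `p ∈ Λ²H` and the `Fin 4`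
variables those of `a ∈ H`. -/
abbrev R9 := MvPolynomial (Fin 6 ⊕ Fin 4) ℂ

/-- The Plücker relation `p ∧ p = 0`. -/
def pl9 : R9 := X (Sum.inl 0) * X (Sum.inl 5) - X (Sum.inl 1) * X (Sum.inl 4) +
  X (Sum.inl 2) * X (Sum.inl 3)

/-- The four components of `p ∧ a ∈ Λ³H`. -/
def wedge9 : Fin 4 → R9 :=
  ![X (Sum.inl 0) * X (Sum.inr 2) - X (Sum.inl 1) * X (Sum.inr 1) +
      X (Sum.inl 3) * X (Sum.inr 0),
    X (Sum.inl 0) * X (Sum.inr 3) - X (Sum.inl 2) * X (Sum.inr 1) +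
      X (Sum.inl 4) * X (Sum.inr 0),
    X (Sum.inl 1) * X (Sum.inr 3) - X (Sum.inl 2) * X (Sum.inr 2) +
      X (Sum.inl 5) * X (Sum.inr 0),
    X (Sum.inl 3) * X (Sum.inr 3) - X (Sum.inl 4) * X (Sum.inr 2) +
      X (Sum.inl 5) * X (Sum.inr 1)]

/-- `C = {(p,a) ∈ Λ²H × H : p ∧ p = 0, p ∧ a = 0}`, in coordinates. -/
def C9 : Set (Fin 6 ⊕ Fin 4 → ℂ) :=
  {x | eval x pl9 = 0 ∧ ∀ i, eval x (wedge9 i) = 0}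

/-- The vanishing ideal of `C`. -/
def J9 : Ideal R9 where
  carrier := {f | ∀ x ∈ C9, eval x f = 0}
  add_mem' := fun ha hb x hx => by simp [map_add, ha x hx, hb x hx]
  zero_mem' := fun x hx => by simp
  smul_mem' := fun c f hf x hx => by simp [smul_eq_mul, map_mul, hf x hx]

/-- A polynomial parametrization of ten-space whose restriction to `y₀ = y₁ = y₂ = 0`
parametrizes a dense subset of `C`. -/
def Psi9 {A : Type*} [CommRing A] (y : Fin 10 → A) : Fin 6 ⊕ Fin 4 → A :=
  Sum.elim ![y 9 * y 3, y 9 * y 4, y 9 * y 5,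
    y 8 * y 4 - y 7 * y 3 + y 0, y 8 * y 5 - y 6 * y 3 + y 1, y 7 * y 5 - y 6 * y 4 + y 2]
    ![y 9, y 8, y 7, y 6]

/-- The generic point with the first `k` coordinates set to zero. -/
def gen9 (k : ℕ) (j : Fin 10) : MvPolynomial (Fin 10) ℂ := if (j : ℕ) < k then 0 else X j

/-- The restricted parametrization on rings. -/
def hom9 (k : ℕ) : R9 →ₐ[ℂ] MvPolynomial (Fin 10) ℂ := aeval (Psi9 (gen9 k))

/-- The chain of prime ideals. -/
def P9 (k : ℕ) : Ideal R9 := RingHom.ker (hom9 k)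

instance P9_prime (k : ℕ) : (P9 k).IsPrime := RingHom.ker_isPrime _

lemma Psi9_map {A B : Type*} [CommRing A] [CommRing B] (f : A →+* B) (y : Fin 10 → A)
    (i : Fin 6 ⊕ Fin 4) : f (Psi9 y i) = Psi9 (fun j => f (y j)) i := by
  rcases i with i | i <;> fin_cases i <;> simp [Psi9]

lemma eval_hom9 (k : ℕ) (f : R9) (y : Fin 10 → ℂ) :
    eval y (hom9 k f) = eval (Psi9 (fun j => if (j : ℕ) < k then 0 else y j)) f := by
  have h : ((aeval y : MvPolynomial (Fin 10) ℂ →ₐ[ℂ] ℂ).comp (hom9 k)) =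
      (aeval (Psi9 (fun j => if (j : ℕ) < k then 0 else y j)) : R9 →ₐ[ℂ] ℂ) := by
    apply MvPolynomial.algHom_ext
    intro i
    simp only [AlgHom.comp_apply, hom9, aeval_X]
    have := Psi9_map (aeval y : MvPolynomial (Fin 10) ℂ →ₐ[ℂ] ℂ).toRingHom (gen9 k) i
    refine this.trans ?_
    congr 1
    funext j
    simp only [gen9]
    split_ifs <;> simp
  have := congrArg (fun g => g f) h
  simpa [aeval_eq_eval] using this

lemma mem_P9 (k : ℕ) (f : R9) :
    f ∈ P9 k ↔ ∀ y : Fin 10 → ℂ, (∀ j : Fin 10, (j : ℕ) < k → y j = 0) →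
      eval (Psi9 y) f = 0 := by
  rw [P9, RingHom.mem_ker]
  constructor
  · intro h y hy
    have h1 := eval_hom9 k f y
    have h2 : (fun j : Fin 10 => if (j : ℕ) < k then 0 else y j) = y := by
      funext j
      split_ifs with hj
      · exact (hy j hj).symm
      · rfl
    rw [h2] at h1
    rw [← h1, show hom9 k f = 0 from h, map_zero]
  · intro h
    apply MvPolynomial.funext
    intro y
    rw [map_zero]
    refine (eval_hom9 k f y).trans (h _ ?_)
    intro j hj
    simp [hj]

/-- Elements separating consecutive members of the chain. -/
def wit9 : Fin 10 → R9 :=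
  ![wedge9 0, wedge9 1, wedge9 2, X (Sum.inl 0), X (Sum.inl 1), X (Sum.inl 2),
    X (Sum.inr 3), X (Sum.inr 2), X (Sum.inr 1), X (Sum.inr 0)]

lemma eval_wit9 (k : Fin 10) (y : Fin 10 → ℂ) :
    eval (Psi9 y) (wit9 k) = y k * (if (k : ℕ) < 6 then y 9 else 1) := by
  fin_cases k <;> simp [wit9, wedge9, Psi9] <;> ring

lemma P9_lt (k : Fin 10) : P9 k < P9 (k + 1) := by
  refine lt_of_le_of_ne ?_ ?_
  · intro f hf
    rw [mem_P9] at hf ⊢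
    exact fun y hy => hf y (fun j hj => hy j (by omega))
  · intro h
    have h1 : wit9 k ∈ P9 (k + 1) := by
      rw [mem_P9]
      intro y hy
      rw [eval_wit9, hy k (by omega), zero_mul]
    rw [← h, mem_P9] at h1
    have h2 := h1 (fun j => if (j : ℕ) < k then 0 else 1) (fun j hj => by simp [hj])
    rw [eval_wit9] at h2
    have h9 : ¬ 9 < (k : ℕ) := by omega
    simp [h9] at h2

/-- The surjective parametrization `(u, v, s, t) ↦ (u ∧ v, s u + t v)` of `C`. -/
def Par9 {A : Type*} [CommRing A] (u v : Fin 4 → A) (s t : A) : Fin 6 ⊕ Fin 4 → A :=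
  Sum.elim ![u 0 * v 1 - u 1 * v 0, u 0 * v 2 - u 2 * v 0, u 0 * v 3 - u 3 * v 0,
    u 1 * v 2 - u 2 * v 1, u 1 * v 3 - u 3 * v 1, u 2 * v 3 - u 3 * v 2]
    (fun i => s * u i + t * v i)

lemma mem_C9 (x : Fin 6 ⊕ Fin 4 → ℂ) : x ∈ C9 ↔
    x (.inl 0) * x (.inl 5) - x (.inl 1) * x (.inl 4) + x (.inl 2) * x (.inl 3) = 0 ∧
    x (.inl 0) * x (.inr 2) - x (.inl 1) * x (.inr 1) + x (.inl 3) * x (.inr 0) = 0 ∧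
    x (.inl 0) * x (.inr 3) - x (.inl 2) * x (.inr 1) + x (.inl 4) * x (.inr 0) = 0 ∧
    x (.inl 1) * x (.inr 3) - x (.inl 2) * x (.inr 2) + x (.inl 5) * x (.inr 0) = 0 ∧
    x (.inl 3) * x (.inr 3) - x (.inl 4) * x (.inr 2) + x (.inl 5) * x (.inr 1) = 0 := by
  simp [C9, pl9, wedge9, Fin.forall_fin_succ]

lemma Par9_mem (u v : Fin 4 → ℂ) (s t : ℂ) : Par9 u v s t ∈ C9 := by
  rw [mem_C9]
  simp only [Par9, Sum.elim_inl, Sum.elim_inr, Matrix.cons_val]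
  refine ⟨?_, ?_, ?_, ?_, ?_⟩ <;> ring

lemma Par9_surj (x : Fin 6 ⊕ Fin 4 → ℂ) (hx : x ∈ C9) :
    ∃ u v s t, x = Par9 u v s t := by
  rw [mem_C9] at hx
  obtain ⟨p, q, hpq⟩ : ∃ p q, x = Sum.elim p q := ⟨_, _, (Sum.elim_comp_inl_inr x).symm⟩
  subst hpq
  simp only [Sum.elim_inl, Sum.elim_inr] at hx
  obtain ⟨h0, h1, h2, h3, h4⟩ := hx
  have key : ∀ u v : Fin 4 → ℂ, ∀ s t : ℂ, p 0 = u 0 * v 1 - u 1 * v 0 →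
      p 1 = u 0 * v 2 - u 2 * v 0 → p 2 = u 0 * v 3 - u 3 * v 0 →
      p 3 = u 1 * v 2 - u 2 * v 1 → p 4 = u 1 * v 3 - u 3 * v 1 →
      p 5 = u 2 * v 3 - u 3 * v 2 → q 0 = s * u 0 + t * v 0 → q 1 = s * u 1 + t * v 1 →
      q 2 = s * u 2 + t * v 2 → q 3 = s * u 3 + t * v 3 →
      ∃ u v s t, Sum.elim p q = Par9 u v s t := by
    intro u v s t e0 e1 e2 e3 e4 e5 f0 f1 f2 f3
    refine ⟨u, v, s, t, ?_⟩
    funext i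
    rcases i with i | i <;> fin_cases i <;> simpa [Par9]
  by_cases c0 : p 0 ≠ 0
  · apply key ![1, 0, -p 3 / p 0, -p 4 / p 0] ![0, p 0, p 1, p 2] (q 0) (q 1 / p 0) <;>
      simp only [Matrix.cons_val] <;> field_simp <;> grind
  by_cases c1 : p 1 ≠ 0
  · apply key ![1, p 3 / p 1, 0, -p 5 / p 1] ![0, p 0, p 1, p 2] (q 0) (q 2 / p 1) <;>
      simp only [Matrix.cons_val] <;> field_simp <;> grind
  by_cases c2 : p 2 ≠ 0
  · apply key ![1, p 4 / p 2, p 5 / p 2, 0] ![0, p 0, p 1, p 2] (q 0) (q 3 / p 2) <;>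
      simp only [Matrix.cons_val] <;> field_simp <;> grind
  by_cases c3 : p 3 ≠ 0
  · apply key ![0, 1, 0, -p 5 / p 3] ![0, 0, p 3, p 4] (q 1) (q 2 / p 3) <;>
      simp only [Matrix.cons_val] <;> field_simp <;> grind
  by_cases c4 : p 4 ≠ 0
  · apply key ![0, 1, p 5 / p 4, 0] ![0, 0, p 3, p 4] (q 1) (q 3 / p 4) <;>
      simp only [Matrix.cons_val] <;> field_simp <;> grind
  by_cases c5 : p 5 ≠ 0
  · apply key ![0, 0, 1, 0] ![0, 0, 0, p 5] (q 2) (q 3 / p 5) <;>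
      simp only [Matrix.cons_val] <;> field_simp <;> grind
  · push Not at c0 c1 c2 c3 c4 c5
    apply key q 0 1 0 <;> simp [*]

lemma Par9_map {A B : Type*} [CommRing A] [CommRing B] (f : A →+* B) (u v : Fin 4 → A)
    (s t : A) (i : Fin 6 ⊕ Fin 4) :
    f (Par9 u v s t i) = Par9 (fun j => f (u j)) (fun j => f (v j)) (f s) (f t) i := by
  rcases i with i | i <;> fin_cases i <;> simp [Par9]

lemma dense9 (x : Fin 6 ⊕ Fin 4 → ℂ) (hx : x ∈ C9) (h : x (.inr 0) ≠ 0) :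
    ∃ y : Fin 10 → ℂ, (∀ j : Fin 10, (j : ℕ) < 3 → y j = 0) ∧ Psi9 y = x := by
  rw [mem_C9] at hx
  obtain ⟨h0, h1, h2, h3, h4⟩ := hx
  refine ⟨![0, 0, 0, x (.inl 0) / x (.inr 0), x (.inl 1) / x (.inr 0), x (.inl 2) / x (.inr 0),
    x (.inr 3), x (.inr 2), x (.inr 1), x (.inr 0)], ?_, ?_⟩
  · intro j hj
    fin_cases j <;> simp at hj ⊢
  · funext i
    rcases i with i | i <;> fin_cases i <;>
      simp only [Psi9, Sum.elim_inl, Sum.elim_inr, Matrix.cons_val] <;>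
      simp <;> field_simp <;> grind

open Polynomial in
lemma J9_eq : J9 = P9 3 := by
  ext f
  rw [mem_P9]
  constructor
  · intro hf y hy
    apply hf
    rw [mem_C9]
    have e0 := hy 0 (by decide)
    have e1 := hy 1 (by decide)
    have e2 := hy 2 (by decide)
    simp only [Psi9, Sum.elim_inl, Sum.elim_inr, Matrix.cons_val, e0, e1, e2]
    refine ⟨?_, ?_, ?_, ?_, ?_⟩ <;> ring
  · intro hf x hx
    have hf' : ∀ x ∈ C9, x (.inr 0) ≠ 0 → eval x f = 0 := by
      intro x hx h
      obtain ⟨y, hy, rfl⟩ := dense9 x hx h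
      exact hf y hy
    obtain ⟨u, v, s, t, rfl⟩ := Par9_surj x hx
    let U : Fin 4 → ℂ[X] := fun j => Polynomial.C (u j) + if j = 0 then Polynomial.X else 0
    let V : Fin 4 → ℂ[X] := fun j => Polynomial.C (v j)
    let S : ℂ[X] := Polynomial.C s + Polynomial.X
    let T : ℂ[X] := Polynomial.C t
    let c : Fin 6 ⊕ Fin 4 → ℂ[X] := Par9 U V S T
    have hev : ∀ τ : ℂ, ∀ g : R9, Polynomial.eval τ (MvPolynomial.aeval c g) =
        MvPolynomial.eval (fun i => Polynomial.eval τ (c i)) g := by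
      intro τ g
      induction g using MvPolynomial.induction_on with
      | C a => simp [MvPolynomial.aeval_C]
      | add p q hp hq => simp [hp, hq]
      | mul_X p n hp => simp [hp]
    have hmem : ∀ τ : ℂ, (fun i => Polynomial.eval τ (c i)) ∈ C9 := by
      intro τ
      have : (fun i => Polynomial.eval τ (c i)) = Par9 (fun j => Polynomial.eval τ (U j))
          (fun j => Polynomial.eval τ (V j)) (Polynomial.eval τ S) (Polynomial.eval τ T) := by
        funext i
        exact Par9_map (Polynomial.evalRingHom τ) U V S T i
      rw [this]
      exact Par9_mem _ _ _ _
    have hprod : MvPolynomial.aeval c f * c (.inr 0) = 0 := by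
      apply Polynomial.funext
      intro τ
      rw [Polynomial.eval_mul, hev, Polynomial.eval_zero]
      by_cases h : Polynomial.eval τ (c (.inr 0)) = 0
      · rw [h, mul_zero]
      · rw [hf' _ (hmem τ) h, zero_mul]
    have hne : c (.inr 0) ≠ 0 := by
      have h1 : c (.inr 0) = Polynomial.X ^ 2 + Polynomial.C (s + u 0) * Polynomial.X
          + Polynomial.C (s * u 0 + t * v 0) := by
        simp [c, Par9, U, V, S, T]
        ring
      intro h0
      have h2 := congrArg (fun p => Polynomial.coeff p 2) (h1.symm.trans h0)
      simp [Polynomial.coeff_X, Polynomial.coeff_C] at h2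
    have hz := (mul_eq_zero.mp hprod).resolve_right hne
    have := hev 0 f
    rw [hz, Polynomial.eval_zero] at this
    rw [this]
    congr 2
    funext i
    refine Eq.trans ?_ (Par9_map (Polynomial.evalRingHom 0) U V S T i).symm
    congr 1 <;> simp [U, V, S, T]
    funext j
    split_ifs <;> simp

lemma dim9 : ringKrullDim (R9 ⧸ J9) = 7 := by
  rw [J9_eq, ringKrullDim_quotient]
  let x : PrimeSpectrum R9 := ⟨P9 3, P9_prime 3⟩
  have hz : PrimeSpectrum.zeroLocus (P9 3 : Set R9) = Set.Ici x := by
    ext y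
    rfl
  rw [hz, ← Order.coheight_eq_krullDim_Ici]
  let L : LTSeries (PrimeSpectrum R9) :=
    { length := 10
      toFun := fun k => ⟨P9 k, P9_prime k⟩
      step := fun k => P9_lt k }
  have h1 : ((3 : ℕ) : ℕ∞) ≤ Order.height x := Order.index_le_height L (3 : Fin 11)
  have h2 : ((7 : ℕ) : ℕ∞) ≤ Order.coheight x := Order.rev_index_le_coheight L (3 : Fin 11)
  have h3 : ((Order.height x + Order.coheight x : ℕ∞) : WithBot ℕ∞) ≤ ((10 : ℕ∞) : WithBot ℕ∞) := by
    have hd : Order.krullDim (PrimeSpectrum R9) = ((10 : ℕ∞) : WithBot ℕ∞) := by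
      have := MvPolynomial.ringKrullDim_of_isNoetherianRing (R := ℂ) (ι := Fin 6 ⊕ Fin 4)
      rw [ringKrullDim_eq_zero_of_field] at this
      refine this.trans ?_
      simp
    rw [← hd, Order.krullDim_eq_iSup_height_add_coheight_of_nonempty]
    exact_mod_cast le_iSup (fun a : PrimeSpectrum R9 => Order.height a + Order.coheight a) x
  have h4 : Order.height x + Order.coheight x ≤ 10 := by exact_mod_cast h3
  have h5 : Order.coheight x = 7 := by
    generalize Order.height x = a at *
    generalize Order.coheight x = b at *
    cases a with
    | top => simp at h4
    | coe a =>
      cases b with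
      | top => simp at h4
      | coe b =>
        norm_cast at *
        omega
  rw [h5]
  rfl

lemma axis9 (f : R9) (hf : f ∈ J9) (i : Fin 6 ⊕ Fin 4) (τ : ℂ) :
    eval (Pi.single i τ) f = 0 := by
  apply hf
  rw [mem_C9]
  rcases i with i | i <;> fin_cases i <;> simp [Pi.single_apply]

lemma zero9 (f : R9) (hf : f ∈ J9) : eval 0 f = 0 := by
  have := axis9 f hf (.inl 0) 0
  rwa [Pi.single_zero] at this

lemma grad9 (f : R9) (hf : f ∈ J9) (i : Fin 6 ⊕ Fin 4) : eval 0 (pderiv i f) = 0 := by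
  let T : R9 →ₐ[ℂ] Polynomial ℂ := aeval (Pi.single i Polynomial.X)
  have hT : T f = 0 := by
    apply Polynomial.funext
    intro τ
    have : ∀ g : R9, Polynomial.eval τ (T g) = eval (Pi.single i τ) g := by
      intro g
      induction g using MvPolynomial.induction_on with
      | C a => simp [T, MvPolynomial.aeval_C]
      | add p q hp hq => simp [hp, hq]
      | mul_X p n hp =>
        rw [map_mul, Polynomial.eval_mul, hp, map_mul]
        by_cases h : n = i
        · subst h; simp [T]
        · simp [T, h]
    rw [this, axis9 f hf i τ, Polynomial.eval_zero]
  have hD : ∀ g : R9, Polynomial.eval 0 (Polynomial.derivative (T g)) = eval 0 (pderiv i g) ∧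
      Polynomial.eval 0 (T g) = eval 0 g := by
    intro g
    induction g using MvPolynomial.induction_on with
    | C a => simp [T, MvPolynomial.aeval_C]
    | add p q hp hq => simp [hp, hq]
    | mul_X p n hp =>
      by_cases h : n = i
      · subst h; simp [T] at hp ⊢; simp [hp]
      · simp [T, h, pderiv_X] at hp ⊢
  rw [← (hD f).1, hT]
  simp

/-- Some second derivatives at the origin. -/
def hess9 (f : R9) : Fin 4 → ℂ :=
  ![eval 0 (pderiv (.inl 0) (pderiv (.inr 2) f)), eval 0 (pderiv (.inl 0) (pderiv (.inr 3) f)),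
    eval 0 (pderiv (.inl 1) (pderiv (.inr 3) f)), eval 0 (pderiv (.inl 3) (pderiv (.inr 3) f))]

lemma hess9_add (f g : R9) : hess9 (f + g) = hess9 f + hess9 g := by
  funext i
  fin_cases i <;> simp [hess9]

lemma hess9_mul (a f : R9) (hf : f ∈ J9) : hess9 (a * f) = eval 0 a • hess9 f := by
  funext i
  have h0 := zero9 f hf
  have h1 := grad9 f hf
  simp at h0 h1
  fin_cases i <;> simp [hess9, Derivation.leibniz, h0, h1]

lemma wedge9_mem (i : Fin 4) : wedge9 i ∈ J9 := fun _ hx => hx.2 i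

lemma hess9_wedge (i : Fin 4) : hess9 (wedge9 i) = Pi.single i 1 := by
  funext j
  fin_cases i <;> fin_cases j <;>
    simp [hess9, wedge9, Derivation.leibniz, pderiv_X, Pi.single_apply]

lemma not_ci9 : ¬ ∃ f g h : R9, Ideal.span {f, g, h} = J9 := by
  rintro ⟨f, g, h, hJ⟩
  have hf : f ∈ J9 := hJ ▸ Ideal.subset_span (by simp)
  have hg : g ∈ J9 := hJ ▸ Ideal.subset_span (by simp)
  have hh : h ∈ J9 := hJ ▸ Ideal.subset_span (by simp)
  let b : Fin 3 → (Fin 4 → ℂ) := ![hess9 f, hess9 g, hess9 h]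
  have hb : ∀ i : Fin 4, (Pi.single i 1 : Fin 4 → ℂ) ∈ Submodule.span ℂ (Set.range b) := by
    intro i
    have hm := wedge9_mem i
    rw [← hJ, Ideal.mem_span_insert] at hm
    obtain ⟨α, z, hz, e⟩ := hm
    rw [Ideal.mem_span_pair] at hz
    obtain ⟨β, γ, rfl⟩ := hz
    rw [← hess9_wedge, e, hess9_add, hess9_add, hess9_mul _ _ hf, hess9_mul _ _ hg,
      hess9_mul _ _ hh]
    refine Submodule.add_mem _ (Submodule.smul_mem _ _ (Submodule.subset_span ⟨0, rfl⟩))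
      (Submodule.add_mem _ (Submodule.smul_mem _ _ (Submodule.subset_span ⟨1, rfl⟩))
      (Submodule.smul_mem _ _ (Submodule.subset_span ⟨2, rfl⟩)))
  have htop : Submodule.span ℂ (Set.range b) = ⊤ := by
    rw [eq_top_iff, ← (Pi.basisFun ℂ (Fin 4)).span_eq, Submodule.span_le]
    rintro _ ⟨i, rfl⟩
    rw [Pi.basisFun_apply]
    exact hb i
  have hle := finrank_range_le_card (R := ℂ) b
  rw [Set.finrank, htop] at hle
  simp at hle

/-- `C` is an irreducible variety of codimension 3 in the 10-dimensional
affine space `Λ²H × H` (its vanishing ideal is prime and its coordinate ring has Krull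
dimension 7); in particular `C` is not a complete intersection: its vanishing ideal
cannot be generated by 3 elements (although `C` is cut out by 5 equations). -/
theorem stmt9 :
    J9.IsPrime ∧ ringKrullDim (R9 ⧸ J9) = 7 ∧
    ¬ ∃ f g h : R9, Ideal.span {f, g, h} = J9 := by
  exact ⟨J9_eq ▸ P9_prime 3, dim9, not_ci9⟩

end
end
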